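/- For every integer n ≥ 2, one has (1 − (ln n)/(5n))·E_n^* ≤ B_n ≤ E_n^*. -/

import Mathlib

/-- Principal branch of the Lambert W function on `[0, ∞)`: for `x ≥ 0`,
`lambertW x` is the unique `y ≥ 0` with `y * exp y = x`. -/
noncomputable def lambertW (x : ℝ) : ℝ := Function.invFun (fun y : ℝ => y * Real.exp y) x

/-- Bell numbers: `Bell 0 = 1` and `Bell (n+1) = ∑_{k=0}^{n} C(n,k) * Bell k`. -/
def Bell : ℕ → ℕ
  | 0 => 1
  | n + 1 => ∑ k ∈ (Finset.range (n + 1)).attach, (n.choose k.1) * Bell k.1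
decreasing_by exact Finset.mem_range.mp k.2

/-- `E* n = exp(e^{W(n)} + n W(n) - (n+1)) / sqrt(1 + W(n))`. -/
noncomputable def Estar (n : ℕ) : ℝ :=
  Real.exp (Real.exp (lambertW n) + n * lambertW n - (n + 1)) / Real.sqrt (1 + lambertW n)


theorem bell_succ (n : ℕ) : Bell (n+1) = ∑ k ∈ Finset.range (n + 1), n.choose k * Bell k := by
  rw [Bell, Finset.sum_attach (Finset.range (n+1)) (fun k => n.choose k * Bell k)]

theorem lambertW_spec (x : ℝ) (hx : 0 < x) :
    lambertW x * Real.exp (lambertW x) = x ∧ 0 < lambertW x := by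
  have h1 : ∃ y : ℝ, (fun y : ℝ => y * Real.exp y) y = x := by
    have hc : ContinuousOn (fun y : ℝ => y * Real.exp y) (Set.Icc 0 x) := by fun_prop
    have := intermediate_value_Icc hx.le hc
    have hm : x ∈ Set.Icc ((fun y : ℝ => y * Real.exp y) 0) ((fun y : ℝ => y * Real.exp y) x) := by
      constructor
      · simpa using hx.le
      · have := Real.add_one_le_exp x
        simp only
        nlinarith
    obtain ⟨y, _, hy⟩ := this hm
    exact ⟨y, hy⟩
  have h2 : lambertW x * Real.exp (lambertW x) = x := Function.invFun_eq h1
  refine ⟨h2, ?_⟩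
  by_contra h
  push Not at h
  have := Real.exp_pos (lambertW x)
  nlinarith

theorem lambertW_ge (x a : ℝ) (hx : 0 < x) (h : a * Real.exp a ≤ x) : a ≤ lambertW x := by
  obtain ⟨h1, h2⟩ := lambertW_spec x hx
  by_contra hc
  push Not at hc
  have := Real.exp_lt_exp.2 hc
  have := Real.exp_pos (lambertW x)
  nlinarith

theorem lambertW_le (x a : ℝ) (hx : 0 < x) (ha : 0 < a) (h : x ≤ a * Real.exp a) :
    lambertW x ≤ a := by
  obtain ⟨h1, h2⟩ := lambertW_spec x hx
  by_contra hc
  push Not at hc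
  have := Real.exp_lt_exp.2 hc
  have := Real.exp_pos a
  nlinarith

theorem bell_deriv (n : ℕ) :
    iteratedDeriv n (fun z : ℂ => Complex.exp (Complex.exp z - 1)) 0 = (Bell n : ℂ) := by
  induction n using Nat.strong_induction_on with
  | _ n ih =>
    cases n with
    | zero => simp [Bell]
    | succ n =>
      rw [iteratedDeriv_succ']
      have hd : deriv (fun z : ℂ => Complex.exp (Complex.exp z - 1)) =
          fun z => Complex.exp (Complex.exp z - 1) * Complex.exp z := by
        funext z
        have : HasDerivAt (fun z : ℂ => Complex.exp (Complex.exp z - 1))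
          (Complex.exp (Complex.exp z - 1) * Complex.exp z) z :=
          ((Complex.hasDerivAt_exp z).sub_const 1).cexp
        exact this.deriv
      rw [hd, iteratedDeriv_fun_mul]
      · rw [bell_succ]
        push_cast
        refine Finset.sum_congr rfl fun i hi => ?_
        rw [ih i (Finset.mem_range.1 hi)]
        have : iteratedDeriv (n - i) Complex.exp 0 = 1 := by
          rw [iteratedDeriv_eq_iterate, Complex.iter_deriv_exp]; simp
        rw [this, mul_one]
      · have : ContDiff ℂ n (fun z : ℂ => Complex.exp (Complex.exp z - 1)) := by fun_prop
        exact this.contDiffAt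
      · exact Complex.contDiff_exp.contDiffAt

noncomputable def gfun (w : ℝ) (n : ℕ) (t : ℝ) : ℂ :=
  Complex.exp (Complex.exp (w * Complex.exp (t * Complex.I)) - Real.exp w - n * t * Complex.I)

theorem bell_integral (w : ℝ) (hw : 0 < w) (n : ℕ) :
    (Bell n : ℝ) = n.factorial / w ^ n * Real.exp (Real.exp w - 1) / (2 * Real.pi) *
      ∫ t in (-Real.pi)..Real.pi, (gfun w n t).re := by
  have h1 := DiffContOnCl.circleIntegral_one_div_sub_center_pow_smul (c := 0) hw n
    (f := fun z : ℂ => Complex.exp (Complex.exp z - 1)) (by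
      apply Differentiable.diffContOnCl; fun_prop)
  rw [bell_deriv] at h1
  rw [circleIntegral] at h1
  have h2 : ∀ θ : ℝ, deriv (circleMap 0 w) θ • ((1 / (circleMap 0 w θ - 0) ^ (n+1)) •
      Complex.exp (Complex.exp (circleMap 0 w θ) - 1)) =
      (Complex.I * (w:ℂ)⁻¹^n * Complex.exp (Real.exp w - 1)) * gfun w n θ := by
    intro θ
    rw [deriv_circleMap, gfun]
    simp only [circleMap, zero_add, sub_zero, smul_eq_mul]
    have hw' : (w:ℂ) ≠ 0 := by exact_mod_cast hw.ne'
    have e1 : Complex.exp (Complex.exp (w * Complex.exp (θ * Complex.I)) - 1) =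
      Complex.exp (Real.exp w - 1) * Complex.exp (Complex.exp (w * Complex.exp (θ * Complex.I)) - Real.exp w - n * θ * Complex.I) * Complex.exp (θ * Complex.I)^n := by
      rw [← Complex.exp_nat_mul, ← Complex.exp_add, ← Complex.exp_add]
      congr 1; ring
    rw [e1]
    have := Complex.exp_ne_zero (θ * Complex.I)
    field_simp
    rw [mul_pow, one_div, inv_pow]
    field_simp
    ring
  simp_rw [h2] at h1
  rw [intervalIntegral.integral_const_mul] at h1
  have hper : Function.Periodic (gfun w n) (2 * Real.pi) := by
    intro t
    unfold gfun
    have : Complex.exp (((t + 2 * Real.pi : ℝ) : ℂ) * Complex.I) = Complex.exp (t * Complex.I) := by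
      push_cast
      rw [add_mul, Complex.exp_add, Complex.exp_two_pi_mul_I, mul_one]
    rw [this]
    rw [Complex.exp_eq_exp_iff_exists_int]
    refine ⟨-n, ?_⟩
    push_cast; ring
  have hshift : ∫ θ in (0:ℝ)..2 * Real.pi, gfun w n θ = ∫ t in (-Real.pi)..Real.pi, gfun w n t := by
    have := hper.intervalIntegral_add_eq 0 (-Real.pi)
    rw [zero_add] at this
    rw [this]; congr 1; ring
  rw [hshift] at h1
  have hint : IntervalIntegrable (gfun w n) MeasureTheory.volume (-Real.pi) Real.pi := by
    apply Continuous.intervalIntegrable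
    unfold gfun; fun_prop
  have h3 : (∫ t in (-Real.pi)..Real.pi, gfun w n t) =
      ((2 * Real.pi / n.factorial * Bell n * w^n * Real.exp (-(Real.exp w - 1)) : ℝ) : ℂ) := by
    have hw' : (w:ℂ) ≠ 0 := by exact_mod_cast hw.ne'
    have hI := Complex.I_ne_zero
    have hE : Complex.exp (Real.exp w - 1) * Complex.exp (-(Real.exp w - 1)) = 1 := by
      rw [← Complex.exp_add]; simp
    push_cast
    push_cast at h1 hE
    simp only [smul_eq_mul] at h1
    have h4 := congrArg (fun z => z * (Complex.I⁻¹ * w^n * Complex.exp (-(Complex.exp w - 1)))) h1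
    have e : (Complex.I * (w:ℂ)⁻¹ ^ n * Complex.exp (Complex.exp w - 1)) * (Complex.I⁻¹ * w^n * Complex.exp (-(Complex.exp w - 1))) = 1 := by
      calc _ = (Complex.I * Complex.I⁻¹) * ((w:ℂ)⁻¹ * w)^n * (Complex.exp (Complex.exp w - 1) * Complex.exp (-(Complex.exp w - 1))) := by rw [mul_pow]; ring
        _ = 1 := by rw [hE, mul_inv_cancel₀ hI, inv_mul_cancel₀ hw']; simp
    rw [mul_right_comm, e, one_mul] at h4
    rw [h4]
    field_simp
  have h5 : ∫ t in (-Real.pi)..Real.pi, (gfun w n t).re =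
      2 * Real.pi / n.factorial * Bell n * w^n * Real.exp (-(Real.exp w - 1)) := by
    have := Complex.reCLM.intervalIntegral_comp_comm hint
    simp only [Complex.reCLM_apply] at this
    rw [this, h3, Complex.ofReal_re]
  rw [h5]
  have hE : Real.exp (Real.exp w - 1) * Real.exp (-(Real.exp w - 1)) = 1 := by
    rw [← Real.exp_add]; simp
  have hf : (n.factorial : ℝ) ≠ 0 := by positivity
  have hp := Real.pi_ne_zero
  rw [Real.exp_neg]
  have := Real.exp_ne_zero (Real.exp w - 1)
  field_simp



theorem nonneg_of_deriv_aux {f f' : ℝ → ℝ} (hd : ∀ x, HasDerivAt f (f' x) x) (h0 : f 0 = 0)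
    (hp : ∀ x, 0 ≤ x → 0 ≤ f' x) (x : ℝ) (hx : 0 ≤ x) : 0 ≤ f x := by
  have hm : MonotoneOn f (Set.Ici 0) := by
    apply monotoneOn_of_deriv_nonneg (convex_Ici 0)
    · exact fun y _ => (hd y).continuousAt.continuousWithinAt
    · exact fun y _ => (hd y).differentiableAt.differentiableWithinAt
    · intro y hy
      rw [(hd y).deriv]
      rw [interior_Ici] at hy
      exact hp y (le_of_lt hy)
  have := hm (Set.mem_Ici.2 le_rfl) (Set.mem_Ici.2 hx) hx
  rwa [h0] at this

theorem cos_le4 (x : ℝ) (hx : 0 ≤ x) : Real.cos x ≤ 1 - x^2/2 + x^4/24 := by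
  have := nonneg_of_deriv_aux (f := fun x => 1 - x^2/2 + x^4/24 - Real.cos x)
    (f' := fun x => Real.sin x - (x - x^3/6)) (fun x => by
      have h1 := ((((hasDerivAt_id x).pow 2).div_const 2).const_sub 1).add (((hasDerivAt_id x).pow 4).div_const 24) |>.sub (Real.hasDerivAt_cos x)
      refine HasDerivAt.congr_deriv h1 ?_
      simp only [id]
      push_cast
      ring) (by simp)
      (fun x hx => by have := Real.sin_ge_sub_cube hx; linarith) x hx
  linarith

theorem sin_le5 (x : ℝ) (hx : 0 ≤ x) : Real.sin x ≤ x - x^3/6 + x^5/120 := by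
  have := nonneg_of_deriv_aux (f := fun x => x - x^3/6 + x^5/120 - Real.sin x)
    (f' := fun x => 1 - x^2/2 + x^4/24 - Real.cos x) (fun x => by
      have h1 := ((hasDerivAt_id x).sub (((hasDerivAt_id x).pow 3).div_const 6)).add (((hasDerivAt_id x).pow 5).div_const 120) |>.sub (Real.hasDerivAt_sin x)
      refine HasDerivAt.congr_deriv h1 ?_
      simp only [id]
      push_cast
      ring) (by simp)
      (fun x hx => by have := cos_le4 x hx; linarith) x hx
  linarith

theorem cos_ge6 (x : ℝ) (hx : 0 ≤ x) : 1 - x^2/2 + x^4/24 - x^6/720 ≤ Real.cos x := by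
  have := nonneg_of_deriv_aux (f := fun x => Real.cos x - (1 - x^2/2 + x^4/24 - x^6/720))
    (f' := fun x => x - x^3/6 + x^5/120 - Real.sin x) (fun x => by
      have h1 := (Real.hasDerivAt_cos x).sub (((((hasDerivAt_id x).pow 2).div_const 2).const_sub 1).add (((hasDerivAt_id x).pow 4).div_const 24) |>.sub (((hasDerivAt_id x).pow 6).div_const 720))
      refine HasDerivAt.congr_deriv h1 ?_
      simp only [id]
      push_cast
      ring) (by simp)
      (fun x hx => by have := sin_le5 x hx; linarith) x hx
  linarith

theorem hasSum_desc (w : ℝ) (k : ℕ) :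
    HasSum (fun j : ℕ => (j.descFactorial k : ℝ) * (w^j / j.factorial)) (w^k * Real.exp w) := by
  have h0 : HasSum (fun j : ℕ => w^j / j.factorial) (Real.exp w) := by
    rw [Real.exp_eq_exp_ℝ]; exact NormedSpace.expSeries_div_hasSum_exp w
  rw [← hasSum_nat_add_iff' k]
  have : ∑ i ∈ Finset.range k, ((i.descFactorial k : ℝ) * (w^i / i.factorial)) = 0 := by
    apply Finset.sum_eq_zero
    intro i hi
    rw [Nat.descFactorial_of_lt (Finset.mem_range.1 hi)]; simp
  rw [this, sub_zero]
  convert! h0.mul_left (w^k) using 1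
  funext j
  have h := Nat.factorial_mul_descFactorial (Nat.le_add_left k j)
  rw [Nat.add_sub_cancel] at h
  have h' : (j.factorial : ℝ) * ((j+k).descFactorial k : ℝ) = ((j+k).factorial : ℝ) := by exact_mod_cast h
  have e1 : (j.factorial : ℝ) ≠ 0 := by positivity
  have e2 : ((j+k).factorial : ℝ) ≠ 0 := by positivity
  field_simp
  rw [← h', pow_add]; ring

theorem desc_cast (j k : ℕ) : ((j.descFactorial (k+1) : ℕ) : ℝ) = (j - k) * (j.descFactorial k : ℝ) := by
  rw [Nat.descFactorial_succ]
  push_cast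
  by_cases h : k ≤ j
  · rw [Nat.cast_sub h]
  · rw [Nat.descFactorial_of_lt (by omega)]; simp

theorem hasSum_exp_pows (w : ℝ) :
    HasSum (fun j : ℕ => w^j / j.factorial) (Real.exp w) ∧
    HasSum (fun j : ℕ => (j:ℝ) * (w^j / j.factorial)) (w * Real.exp w) ∧
    HasSum (fun j : ℕ => (j:ℝ)^2 * (w^j / j.factorial)) (w * Real.exp w * (1 + w)) ∧
    HasSum (fun j : ℕ => (j:ℝ)^3 * (w^j / j.factorial)) (w * Real.exp w * (1 + 3*w + w^2)) ∧
    HasSum (fun j : ℕ => (j:ℝ)^4 * (w^j / j.factorial)) (w * Real.exp w * (1 + 7*w + 6*w^2 + w^3)) ∧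
    HasSum (fun j : ℕ => (j:ℝ)^5 * (w^j / j.factorial)) (w * Real.exp w * (1 + 15*w + 25*w^2 + 10*w^3 + w^4)) ∧
    HasSum (fun j : ℕ => (j:ℝ)^6 * (w^j / j.factorial)) (w * Real.exp w * (1 + 31*w + 90*w^2 + 65*w^3 + 15*w^4 + w^5)) := by
  have h0 := hasSum_desc w 0
  have h1 := hasSum_desc w 1
  have h2 := hasSum_desc w 2
  have h3 := hasSum_desc w 3
  have h4 := hasSum_desc w 4
  have h5 := hasSum_desc w 5
  have h6 := hasSum_desc w 6
  simp only [desc_cast, Nat.descFactorial_zero] at h0 h1 h2 h3 h4 h5 h6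
  refine ⟨?_, ?_, ?_, ?_, ?_, ?_, ?_⟩
  · convert h0 using 1
    · funext j; push_cast; ring
    · ring
  · convert h1 using 1
    · funext j; push_cast; ring
    · ring
  · convert h2.add h1 using 1
    · funext j; push_cast; ring
    · ring
  · convert (h3.add (h2.mul_left 3)).add h1 using 1
    · funext j; push_cast; ring
    · ring
  · convert ((h4.add (h3.mul_left 6)).add (h2.mul_left 7)).add h1 using 1
    · funext j; push_cast; ring
    · ring
  · convert (((h5.add (h4.mul_left 10)).add (h3.mul_left 25)).add (h2.mul_left 15)).add h1 using 1
    · funext j; push_cast; ring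
    · ring
  · convert ((((h6.add (h5.mul_left 15)).add (h4.mul_left 65)).add (h3.mul_left 90)).add (h2.mul_left 31)).add h1 using 1
    · funext j; push_cast; ring
    · ring

theorem hasSum_cos_sin (w t : ℝ) :
    HasSum (fun j : ℕ => Real.cos (j*t) * (w^j / j.factorial)) (Complex.exp (w * Complex.exp (t * Complex.I))).re ∧
    HasSum (fun j : ℕ => Real.sin (j*t) * (w^j / j.factorial)) (Complex.exp (w * Complex.exp (t * Complex.I))).im := by
  have h : HasSum (fun j : ℕ => (w * Complex.exp (t * Complex.I))^j / j.factorial)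
    (Complex.exp (w * Complex.exp (t * Complex.I))) := by
    rw [Complex.exp_eq_exp_ℂ]; exact NormedSpace.expSeries_div_hasSum_exp _
  have e : ∀ j : ℕ, (w * Complex.exp (t * Complex.I))^j / j.factorial =
      ((w^j / j.factorial : ℝ) : ℂ) * (Complex.cos ((j*t : ℝ)) + Complex.sin ((j*t : ℝ)) * Complex.I) := by
    intro j
    rw [← Complex.exp_mul_I, mul_pow, ← Complex.exp_nat_mul]
    push_cast
    rw [show (j:ℂ) * (t * Complex.I) = j * t * Complex.I by ring]
    ring
  simp_rw [e] at h
  constructor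
  · convert Complex.hasSum_re h using 1
    funext j
    rw [Complex.re_ofReal_mul]
    rw [← Complex.ofReal_cos, ← Complex.ofReal_sin]
    simp only [Complex.add_re, Complex.add_im, Complex.re_ofReal_mul, Complex.im_ofReal_mul, Complex.ofReal_re, Complex.ofReal_im, Complex.I_re, Complex.I_im]
    ring
  · convert Complex.hasSum_im h using 1
    funext j
    rw [Complex.im_ofReal_mul]
    rw [← Complex.ofReal_cos, ← Complex.ofReal_sin]
    simp only [Complex.add_re, Complex.add_im, Complex.re_ofReal_mul, Complex.im_ofReal_mul, Complex.ofReal_re, Complex.ofReal_im, Complex.I_re, Complex.I_im]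
    ring

theorem series_bounds (w t : ℝ) (hw : 0 < w) (ht : 0 ≤ t) (N : ℝ) (hN : w * Real.exp w = N) :
    (Complex.exp (w * Complex.exp (t * Complex.I))).re ≤ Real.exp w - N*(1+w)*t^2/2 + N*(1 + 7*w + 6*w^2 + w^3)*t^4/24 ∧
    Real.exp w - N*(1+w)*t^2/2 + N*(1 + 7*w + 6*w^2 + w^3)*t^4/24 - N*(1 + 31*w + 90*w^2 + 65*w^3 + 15*w^4 + w^5)*t^6/720 ≤ (Complex.exp (w * Complex.exp (t * Complex.I))).re ∧
    (Complex.exp (w * Complex.exp (t * Complex.I))).im ≤ N*t - N*(1 + 3*w + w^2)*t^3/6 + N*(1 + 15*w + 25*w^2 + 10*w^3 + w^4)*t^5/120 ∧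
    N*t - N*(1 + 3*w + w^2)*t^3/6 ≤ (Complex.exp (w * Complex.exp (t * Complex.I))).im := by
  obtain ⟨h0, h1, h2, h3, h4, h5, h6⟩ := hasSum_exp_pows w
  obtain ⟨hc, hs⟩ := hasSum_cos_sin w t
  rw [hN] at h1 h2 h3 h4 h5 h6
  have hpos : ∀ j : ℕ, 0 ≤ w^j / j.factorial := fun j => by positivity
  have hjt : ∀ j : ℕ, 0 ≤ (j:ℝ) * t := fun j => by positivity
  refine ⟨?_, ?_, ?_, ?_⟩
  · have hh := (h0.sub (h2.mul_left (t^2/2))).add (h4.mul_left (t^4/24))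
    refine (hasSum_le (fun j => ?_) hc hh).trans (le_of_eq (by ring))
    refine (mul_le_mul_of_nonneg_right (cos_le4 _ (hjt j)) (hpos j)).trans (le_of_eq (by ring))
  · have hh := ((h0.sub (h2.mul_left (t^2/2))).add (h4.mul_left (t^4/24))).sub (h6.mul_left (t^6/720))
    refine (le_of_eq (by ring)).trans (hasSum_le (fun j => ?_) hh hc)
    refine (le_of_eq (by ring)).trans (mul_le_mul_of_nonneg_right (cos_ge6 _ (hjt j)) (hpos j))
  · have hh := ((h1.mul_left t).sub (h3.mul_left (t^3/6))).add (h5.mul_left (t^5/120))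
    refine (hasSum_le (fun j => ?_) hs hh).trans (le_of_eq (by ring))
    refine (mul_le_mul_of_nonneg_right (sin_le5 _ (hjt j)) (hpos j)).trans (le_of_eq (by ring))
  · have hh := ((h1.mul_left t).sub (h3.mul_left (t^3/6)))
    refine (le_of_eq (by ring)).trans (hasSum_le (fun j => ?_) hh hs)
    refine (le_of_eq (by ring)).trans (mul_le_mul_of_nonneg_right (Real.sin_ge_sub_cube (hjt j)) (hpos j))


theorem gauss_moment (b : ℝ) (hb : 0 < b) (k : ℕ) :
    MeasureTheory.Integrable (fun t : ℝ => t^(2*k) * Real.exp (-b * t^2)) ∧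
    ∫ t : ℝ, t^(2*k) * Real.exp (-b * t^2) =
      ((2*k-1).doubleFactorial : ℝ) / (2*b)^k * Real.sqrt (Real.pi / b) := by
  constructor
  · have := integrable_rpow_mul_exp_neg_mul_sq hb (s := ((2*k : ℕ) : ℝ)) (by
      have : (0:ℝ) ≤ ((2*k : ℕ) : ℝ) := by positivity
      linarith)
    simpa only [Real.rpow_natCast] using this
  · have h1 := integral_comp_abs (f := fun t : ℝ => t^(2*k) * Real.exp (-b * t^2))
    have e : ∀ t : ℝ, |t|^(2*k) * Real.exp (-b * |t|^2) = t^(2*k) * Real.exp (-b * t^2) := by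
      intro t
      rw [sq_abs, pow_mul, sq_abs, pow_mul]
    simp only [e] at h1
    rw [h1]
    have h2 := integral_rpow_mul_exp_neg_mul_rpow (p := 2) (q := ((2*k : ℕ) : ℝ)) (b := b) (by norm_num) (by
      have : (0:ℝ) ≤ ((2*k : ℕ) : ℝ) := by positivity
      linarith) hb
    have e2 : ((2:ℝ)) = ((2:ℕ):ℝ) := by norm_num
    have h3 : ∫ (x : ℝ) in Set.Ioi 0, x ^ (2*k) * Real.exp (-b * x ^ 2) = ∫ (x : ℝ) in Set.Ioi 0, x ^ ((2*k : ℕ) : ℝ) * Real.exp (-b * x ^ (2:ℝ)) := by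
      congr 1; funext x
      rw [Real.rpow_natCast, e2, Real.rpow_natCast]
    rw [h3, h2]
    have e3 : (((2*k : ℕ) : ℝ) + 1)/2 = k + 1/2 := by push_cast; ring
    rw [e3, Real.Gamma_nat_add_half, show -(((2*k : ℕ) : ℝ) + 1)/2 = -(k:ℝ) + -(1/2) by push_cast; ring, Real.rpow_add hb, Real.rpow_neg hb.le, Real.rpow_natCast, Real.rpow_neg hb.le, ← Real.sqrt_eq_rpow, Real.sqrt_div Real.pi_pos.le, mul_pow]
    have : Real.sqrt b ≠ 0 := by positivity
    field_simp

theorem stirling_upper (n : ℕ) (hn : 1 ≤ n) :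
    (n.factorial : ℝ) ≤ Real.sqrt (2 * Real.pi * n) * (n / Real.exp 1)^n * Real.exp (1/(12*n)) := by
  have hs : ∀ m : ℕ, 1 ≤ m → 0 < Stirling.stirlingSeq m := by
    intro m hm
    obtain ⟨k, rfl⟩ : ∃ k, m = k + 1 := ⟨m-1, by omega⟩
    exact Stirling.stirlingSeq'_pos k
  have hmono : Monotone (fun m : ℕ => Real.log (Stirling.stirlingSeq (n+m)) - 1/(12*((n+m : ℕ):ℝ))) := by
    apply monotone_nat_of_le_succ
    intro m
    have h := Stirling.log_stirlingSeq_sdiff_le (n+m)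
    have hp : (0:ℝ) < ((n+m : ℕ) : ℝ) := by exact_mod_cast (by omega)
    have : (1:ℝ) / (12 * ((n+m : ℕ):ℝ) * (((n+m : ℕ):ℝ) + 1)) = 1/(12*((n+m : ℕ):ℝ)) - 1/(12*((n+(m+1) : ℕ):ℝ)) := by
      push_cast at hp ⊢
      have h3 : (n:ℝ) + (m + 1) ≠ 0 := by positivity
      have h4 : (n:ℝ) + m + 1 ≠ 0 := by positivity
      field_simp
      ring
    rw [this] at h
    rw [← add_assoc] at h ⊢
    linarith
  have hlim : Filter.Tendsto (fun m : ℕ => Real.log (Stirling.stirlingSeq (n+m)) - 1/(12*((n+m : ℕ):ℝ))) Filter.atTop (nhds (Real.log (Real.sqrt Real.pi) - 0)) := by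
    apply Filter.Tendsto.sub
    · have h1 : Filter.Tendsto (fun m => n + m) Filter.atTop Filter.atTop := Filter.tendsto_atTop_mono (fun m => Nat.le_add_left m n) Filter.tendsto_id
      have := (Stirling.tendsto_stirlingSeq_sqrt_pi.comp h1)
      exact this.log (by positivity)
    · have h1 : Filter.Tendsto (fun m => n + m) Filter.atTop Filter.atTop := Filter.tendsto_atTop_mono (fun m => Nat.le_add_left m n) Filter.tendsto_id
      have h2 := (tendsto_const_div_atTop_nhds_zero_nat (𝕜 := ℝ) (1/12)).comp h1
      refine h2.congr fun m => ?_
      simp only [Function.comp]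
      rw [div_div]
  have h := hmono.ge_of_tendsto hlim 0
  simp only [add_zero, sub_zero] at h
  have h2 : Stirling.stirlingSeq n ≤ Real.sqrt Real.pi * Real.exp (1/(12*n)) := by
    have : Real.log (Stirling.stirlingSeq n) ≤ Real.log (Real.sqrt Real.pi) + 1/(12*n) := by linarith
    rw [← Real.exp_le_exp, Real.exp_log (hs n hn), Real.exp_add, Real.exp_log (by positivity)] at this
    exact this
  have hn0 : (0:ℝ) < n := by exact_mod_cast hn
  rw [Stirling.stirlingSeq, div_le_iff₀ (by positivity)] at h2
  refine h2.trans (le_of_eq ?_)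
  rw [show 2 * Real.pi * (n:ℝ) = Real.pi * (2*n) by ring, Real.sqrt_mul Real.pi_pos.le]
  ring


theorem gfun_re (w : ℝ) (n : ℕ) (t : ℝ) : (gfun w n t).re =
    Real.exp ((Complex.exp (w * Complex.exp (t * Complex.I))).re - Real.exp w) *
      Real.cos ((Complex.exp (w * Complex.exp (t * Complex.I))).im - n * t) := by
  rw [gfun, Complex.exp_re]
  have e : (Complex.exp (w:ℂ)).re = Real.exp w := Complex.exp_ofReal_re w
  congr 2
  · simp [e]
  · simp

theorem gfun_re_abs (w : ℝ) (n : ℕ) (t : ℝ) : (gfun w n |t|).re = (gfun w n t).re := by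
  rcases abs_choice t with h | h
  · rw [h]
  · rw [h, gfun_re, gfun_re]
    obtain ⟨h1, h2⟩ := hasSum_cos_sin w t
    obtain ⟨h3, h4⟩ := hasSum_cos_sin w (-t)
    simp only [mul_neg, Real.cos_neg, Real.sin_neg, neg_mul] at h3 h4
    rw [h3.unique h1, h4.unique h2.neg, ← Real.cos_neg]
    congr 2
    ring

theorem exp_aux1 (x : ℝ) (hx : 0 ≤ x) : Real.exp x ≤ 1 + x * Real.exp x := by
  have h := Real.add_one_le_exp (-x)
  have h2 : Real.exp (-x) * Real.exp x = 1 := by rw [← Real.exp_add]; simp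
  have := Real.exp_pos x
  nlinarith

theorem exp_aux2 (x : ℝ) (hx : 0 ≤ x) : Real.exp x ≤ 1 + x + x^2/2 * Real.exp x := by
  have := nonneg_of_deriv_aux (f := fun x => 1 + x + x^2/2 * Real.exp x - Real.exp x)
    (f' := fun x => 1 + x * Real.exp x + x^2/2*Real.exp x - Real.exp x) (fun x => by
      have h1 := (((hasDerivAt_id x).const_add 1).add ((((hasDerivAt_id x).pow 2).div_const 2).mul (Real.hasDerivAt_exp x))).sub (Real.hasDerivAt_exp x)
      refine HasDerivAt.congr_deriv h1 ?_
      simp only [id, Pi.pow_apply]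
      push_cast
      ring) (by simp)
      (fun x hx => by have := exp_aux1 x hx; have := Real.exp_pos x; have : 0 ≤ x^2/2*Real.exp x := by positivity
                      linarith) x hx
  linarith

theorem cos_le_aux (a b I : ℝ) (ha : 0 ≤ a) (hb : 0 ≤ b) (hba : b ≤ 2*a) (h1 : -a ≤ I) (h2 : I ≤ -a + b) :
    Real.cos I ≤ (1 - a^2/4)^2 + a*b := by
  have h3 : |I| ≤ a := abs_le.2 ⟨h1, by linarith⟩
  have h4 : Real.cos I ≤ 1 - |I|^2/2 + |I|^4/24 := by
    rw [← Real.cos_abs]; exact cos_le4 _ (abs_nonneg _)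
  have h5 : |I|^4 ≤ a^4 := by gcongr
  have h6 : a^2 - 2*a*b ≤ |I|^2 := by
    rw [sq_abs]
    by_cases h : a ≤ b
    · nlinarith [sq_nonneg I]
    · push Not at h
      nlinarith
  have h7 : 0 ≤ a^4 := by positivity
  nlinarith

theorem g_upper (w t : ℝ) (n : ℕ) (hw : 9/2 ≤ w) (ht : 0 ≤ t) (ht0 : t ≤ 5/(4*w)) (hN : w * Real.exp w = n) :
    (gfun w n t).re ≤ Real.exp (-(n*(1+w)/2) * t^2) * ((1 - (n*(1+3*w+w^2)*t^3/6)^2/4)^2 + n*(1+7*w+6*w^2+w^3)*t^4/24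
      + (n*(1+3*w+w^2)*t^3/6)*(n*(1 + 15*w + 25*w^2 + 10*w^3 + w^4)*t^5/120))
     + (n*(1+7*w+6*w^2+w^3)*t^4/24)^2/2 * Real.exp (-(7/10*(n*(1+w)/2)) * t^2) ∧
    Real.exp (-(n*(1+w)/2) * t^2) * (1 + n*(1+7*w+6*w^2+w^3)*t^4/24 - n*(1 + 31*w + 90*w^2 + 65*w^3 + 15*w^4 + w^5)*t^6/720
      - (n*(1+3*w+w^2)*t^3/6)^2/2)
     - (n*(1+7*w+6*w^2+w^3)*t^4/24)*((n*(1+3*w+w^2)*t^3/6)^2/2) * Real.exp (-(7/10*(n*(1+w)/2)) * t^2) ≤ (gfun w n t).re := by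
  have hw0 : 0 < w := by linarith
  obtain ⟨b1, b2, b3, b4⟩ := series_bounds w t hw0 ht n hN
  rw [gfun_re]
  set E := Complex.exp (w * Complex.exp (t * Complex.I))
  have hn0 : (0:ℝ) ≤ n := by positivity
  have htw : t^2 * w^2 ≤ 25/16 := by
    have : t * w ≤ 5/4 := by
      rw [le_div_iff₀ (by positivity)] at ht0; linarith
    have h0 : 0 ≤ t*w := by positivity
    nlinarith
  have hA' : (1+7*w+6*w^2+w^3)*t^2/12 ≤ 3/10*(1+w) := by
    have h1 : (1+7*w+6*w^2+w^3) ≤ 2.21*w^2*(1+w) := by nlinarith [mul_nonneg (sub_nonneg.2 hw) (sub_nonneg.2 hw), mul_nonneg (mul_nonneg (sub_nonneg.2 hw) (sub_nonneg.2 hw)) hw0.le]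
    have h2 : (1+7*w+6*w^2+w^3)*t^2 ≤ 2.21*w^2*(1+w)*t^2 := by gcongr
    nlinarith
  have hba' : (1 + 15*w + 25*w^2 + 10*w^3 + w^4)*t^2/20 ≤ 2*(1+3*w+w^2) := by
    have h1 : (1 + 15*w + 25*w^2 + 10*w^3 + w^4) ≤ 10*w^2*(1+3*w+w^2) := by
      nlinarith [mul_nonneg (sub_nonneg.2 hw) (sub_nonneg.2 hw), mul_nonneg (mul_nonneg (sub_nonneg.2 hw) (sub_nonneg.2 hw)) hw0.le, pow_pos hw0 3, pow_pos hw0 4]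
    have h2 : (1 + 15*w + 25*w^2 + 10*w^3 + w^4)*t^2 ≤ 10*w^2*(1+3*w+w^2)*t^2 := by gcongr
    have h3 : 0 ≤ 1+3*w+w^2 := by positivity
    nlinarith
  obtain ⟨A, hA⟩ : ∃ A, A = n*(1+7*w+6*w^2+w^3)*t^4/24 := ⟨_, rfl⟩
  obtain ⟨a, ha⟩ : ∃ a, a = n*(1+3*w+w^2)*t^3/6 := ⟨_, rfl⟩
  obtain ⟨b, hb⟩ : ∃ b, b = n*(1 + 15*w + 25*w^2 + 10*w^3 + w^4)*t^5/120 := ⟨_, rfl⟩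
  obtain ⟨C, hC⟩ : ∃ C, C = n*(1 + 31*w + 90*w^2 + 65*w^3 + 15*w^4 + w^5)*t^6/720 := ⟨_, rfl⟩
  obtain ⟨q, hq⟩ : ∃ q, q = n*(1+w)/2*t^2 := ⟨_, rfl⟩
  rw [show -((n:ℝ)*(1+w)/2) * t^2 = -q by rw [hq]; ring, show -(7/10*((n:ℝ)*(1+w)/2)) * t^2 = -(7/10*q) by rw [hq]; ring]
  rw [← hA, ← ha, ← hb, ← hC]
  rw [← hA] at b1
  rw [← hA, ← hC] at b2
  rw [← ha, ← hb] at b3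
  rw [← ha] at b4
  have hA0 : 0 ≤ A := by rw [hA]; positivity
  have ha0 : 0 ≤ a := by rw [ha]; positivity
  have hb0 : 0 ≤ b := by rw [hb]; positivity
  have hAq : A ≤ 3/10*q := by
    rw [hA, hq]
    have := mul_le_mul_of_nonneg_left hA' (show 0 ≤ n*t^2/2 by positivity)
    linarith
  have hba : b ≤ 2*a := by
    rw [hb, ha]
    have := mul_le_mul_of_nonneg_left hba' (show 0 ≤ n*t^3/6 by positivity)
    linarith
  obtain ⟨R, hR⟩ : ∃ R, R = E.re - Real.exp w := ⟨_, rfl⟩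
  obtain ⟨I, hI⟩ : ∃ I, I = E.im - n*t := ⟨_, rfl⟩
  rw [← hR, ← hI]
  have r1 : R ≤ -q + A := by rw [hR, hq]; linarith
  have r2 : -q + (A - C) ≤ R := by rw [hR, hq]; linarith
  have i1 : -a ≤ I := by rw [hI]; linarith
  have i2 : I ≤ -a + b := by rw [hI]; linarith
  have hc := cos_le_aux a b I ha0 hb0 hba i1 i2
  have hc1 := Real.cos_le_one I
  have hc2 : 1 - a^2/2 ≤ Real.cos I := by
    have h1 := Real.one_sub_sq_div_two_le_cos (x := I)
    have h2 : I^2 ≤ a^2 := by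
      rw [sq_le_sq, abs_of_nonneg ha0]; exact abs_le.2 ⟨i1, by linarith⟩
    linarith
  have hRu : Real.exp R ≤ Real.exp (-q) * Real.exp A := by rw [← Real.exp_add]; exact Real.exp_le_exp.2 r1
  have hRl : Real.exp (-q) * Real.exp (A - C) ≤ Real.exp R := by rw [← Real.exp_add]; exact Real.exp_le_exp.2 r2
  have h7 : Real.exp (-q) * Real.exp A ≤ Real.exp (-(7/10*q)) := by
    rw [← Real.exp_add]; apply Real.exp_le_exp.2; linarith
  have x2 := exp_aux2 A hA0
  have x1 := exp_aux1 A hA0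
  have x3 := Real.add_one_le_exp (A - C)
  have pq := Real.exp_pos (-q)
  have p7 := Real.exp_pos (-(7/10*q))
  have pA := Real.exp_pos A
  constructor
  · have hpos : 0 ≤ Real.exp (-q) * ((1 - a^2/4)^2 + A + a*b) := by positivity
    have hpos2 : 0 ≤ A^2/2 * Real.exp (-(7/10*q)) := by positivity
    by_cases hcs : Real.cos I ≤ 0
    · have : Real.exp R * Real.cos I ≤ 0 := mul_nonpos_of_nonneg_of_nonpos (Real.exp_pos _).le hcs
      linarith
    · push Not at hcs
      calc Real.exp R * Real.cos I ≤ Real.exp (-q) * Real.exp A * Real.cos I := by gcongr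
        _ = Real.exp (-q) * (Real.exp A * Real.cos I) := by ring
        _ ≤ Real.exp (-q) * ((1 - a^2/4)^2 + a*b + (A + A^2/2*Real.exp A)) := by
            gcongr
            have : (Real.exp A - 1) * Real.cos I ≤ (Real.exp A - 1) * 1 := by
              apply mul_le_mul_of_nonneg_left hc1
              have := Real.add_one_le_exp A
              linarith
            linarith
        _ = Real.exp (-q) * ((1 - a^2/4)^2 + A + a*b) + A^2/2 * (Real.exp (-q) * Real.exp A) := by ring
        _ ≤ _ := by gcongr
  · calc _ ≤ Real.exp (-q) * (1 + A - C - a^2/2) - A*(a^2/2) * (Real.exp (-q) * Real.exp A) := by gcongr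
      _ = Real.exp (-q) * (A - C + 1) - Real.exp (-q) * (1 + A * Real.exp A) * (a^2/2) := by ring
      _ ≤ Real.exp R - Real.exp R * (a^2/2) := by
          apply sub_le_sub
          · exact (mul_le_mul_of_nonneg_left x3 pq.le).trans hRl
          · apply mul_le_mul_of_nonneg_right _ (by positivity)
            exact hRu.trans (mul_le_mul_of_nonneg_left x1 pq.le)
      _ = Real.exp R * (1 - a^2/2) := by ring
      _ ≤ _ := mul_le_mul_of_nonneg_left hc2 (Real.exp_pos R).le

theorem g_far (w t : ℝ) (n : ℕ) (hw : 9/2 ≤ w) (ht : 5/(4*w) ≤ t) (htp : t ≤ Real.pi) :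
    |(gfun w n t).re| ≤ Real.exp (-(709/1000 * Real.exp w / w)) := by
  have hw0 : 0 < w := by linarith
  rw [gfun_re, abs_mul, abs_of_pos (Real.exp_pos _)]
  have h1 : Real.exp ((Complex.exp (w * Complex.exp (t * Complex.I))).re - Real.exp w) ≤ Real.exp (-(709/1000 * Real.exp w / w)) := by
    apply Real.exp_le_exp.2
    have h2 : (Complex.exp (w * Complex.exp (t * Complex.I))).re ≤ Real.exp (w * Real.cos t) := by
      refine (Complex.re_le_norm _).trans ?_
      rw [Complex.norm_exp]
      apply le_of_eq
      congr 1
      rw [Complex.re_ofReal_mul, Complex.exp_ofReal_mul_I_re]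
    have ht0 : 0 ≤ 5/(4*w) := by positivity
    have h3 : Real.cos t ≤ Real.cos (5/(4*w)) := Real.cos_le_cos_of_nonneg_of_le_pi ht0 htp ht
    have h4 := cos_le4 (5/(4*w)) ht0
    have h5 : w * Real.cos t ≤ w - 776/1000/w := by
      have : w * Real.cos t ≤ w * (1 - (5/(4*w))^2/2 + (5/(4*w))^4/24) := by gcongr; linarith
      refine this.trans ?_
      have e : w * (1 - (5/(4*w))^2/2 + (5/(4*w))^4/24) = w - (25/32 - 625/6144/w^2)/w := by
        field_simp; ring
      rw [e]
      gcongr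
      rw [le_sub_comm, div_le_iff₀ (by positivity)]
      nlinarith
    have h6 : Real.exp (w * Real.cos t) ≤ Real.exp w * (1 - 709/1000/w) := by
      refine (Real.exp_le_exp.2 h5).trans ?_
      rw [sub_eq_add_neg, Real.exp_add]
      gcongr
      obtain ⟨h, hh⟩ : ∃ h, h = 776/1000/w := ⟨_, rfl⟩
      have hh0 : 0 ≤ h := by rw [hh]; positivity
      have hh1 : h ≤ 1725/10000 := by rw [hh, div_le_iff₀ hw0]; linarith
      rw [← hh, Real.exp_neg]
      have : 1 + h + h^2/2 ≤ Real.exp h := Real.quadratic_le_exp_of_nonneg hh0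
      have h9 : (709:ℝ)/1000/w = 709/776*h := by rw [hh]; ring
      rw [h9, inv_le_comm₀ (Real.exp_pos h) (by linarith)]
      refine le_trans ?_ this
      rw [inv_le_iff_one_le_mul₀ (by linarith)]
      nlinarith [mul_nonneg hh0 hh0, mul_nonneg (mul_nonneg hh0 hh0) hh0, mul_nonneg hh0 (sub_nonneg.2 hh1), mul_nonneg (mul_nonneg hh0 hh0) (sub_nonneg.2 hh1)]
    have h10 : Real.exp w * (1 - 709/1000/w) = Real.exp w - 709/1000 * Real.exp w / w := by ring
    linarith
  have h2 := Real.abs_cos_le_one ((Complex.exp (w * Complex.exp (t * Complex.I))).im - n * t)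
  calc _ ≤ Real.exp (-(709/1000 * Real.exp w / w)) * 1 := by gcongr
    _ = _ := mul_one _


theorem gauss_poly (b : ℝ) (hb : 0 < b) (a0 a4 a6 a8 a12 d8 d10 : ℝ) :
    MeasureTheory.Integrable (fun t : ℝ => (a0 + a4*t^4 + a6*t^6 + a8*t^8 + a12*t^12) * Real.exp (-b * t^2)
      + (d8*t^8 + d10*t^10) * Real.exp (-(7/10*b) * t^2)) ∧
    ∫ t : ℝ, ((a0 + a4*t^4 + a6*t^6 + a8*t^8 + a12*t^12) * Real.exp (-b * t^2)
      + (d8*t^8 + d10*t^10) * Real.exp (-(7/10*b) * t^2)) =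
     (a0 + 3*a4/(2*b)^2 + 15*a6/(2*b)^3 + 105*a8/(2*b)^4 + 10395*a12/(2*b)^6) * Real.sqrt (Real.pi / b)
     + (105*d8/(2*(7/10*b))^4 + 945*d10/(2*(7/10*b))^5) * Real.sqrt (Real.pi / (7/10*b)) := by
  have hb' : 0 < 7/10*b := by positivity
  obtain ⟨i0, e0⟩ := gauss_moment b hb 0
  obtain ⟨i4, e4⟩ := gauss_moment b hb 2
  obtain ⟨i6, e6⟩ := gauss_moment b hb 3
  obtain ⟨i8, e8⟩ := gauss_moment b hb 4
  obtain ⟨i12, e12⟩ := gauss_moment b hb 6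
  obtain ⟨j8, f8⟩ := gauss_moment _ hb' 4
  obtain ⟨j10, f10⟩ := gauss_moment _ hb' 5
  norm_num [Nat.doubleFactorial] at i0 i4 i6 i8 i12 e0 e4 e6 e8 e12
  have I1 := i0.const_mul a0
  have I2 := i4.const_mul a4
  have I3 := i6.const_mul a6
  have I4 := i8.const_mul a8
  have I5 := i12.const_mul a12
  have I6 := j8.const_mul d8
  have I7 := j10.const_mul d10
  have key : (fun t : ℝ => (a0 + a4*t^4 + a6*t^6 + a8*t^8 + a12*t^12) * Real.exp (-b * t^2)
      + (d8*t^8 + d10*t^10) * Real.exp (-(7/10*b) * t^2)) = fun t => a0 * Real.exp (-(b * t^2)) + a4 * (t^4 * Real.exp (-(b * t^2)))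
      + a6 * (t^6 * Real.exp (-(b * t^2))) + a8 * (t^8 * Real.exp (-(b * t^2))) + a12 * (t^12 * Real.exp (-(b * t^2)))
      + d8 * (t^(2*4) * Real.exp (-(7/10*b) * t^2)) + d10 * (t^(2*5) * Real.exp (-(7/10*b) * t^2)) := by
    funext t
    rw [neg_mul]
    ring
  rw [key]
  refine ⟨(((((I1.add I2).add I3).add I4).add I5).add I6).add I7, ?_⟩
  refine (MeasureTheory.integral_add' ((((((I1.add I2).add I3).add I4).add I5).add I6)) I7).trans ?_
  rw [MeasureTheory.integral_add' (((((I1.add I2).add I3).add I4).add I5)) I6,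
    MeasureTheory.integral_add' ((((I1.add I2).add I3).add I4)) I5,
    MeasureTheory.integral_add' (((I1.add I2).add I3)) I4,
    MeasureTheory.integral_add' ((I1.add I2)) I3,
    MeasureTheory.integral_add' I1 I2]
  simp only [MeasureTheory.integral_const_mul]
  rw [e0, e4, e6, e8, e12, f8, f10]
  norm_num [Nat.doubleFactorial]
  ring

theorem int_bound (g h : ℝ → ℝ) (ε : ℝ) (hg : Continuous g) (hh : MeasureTheory.Integrable h)
    (h1 : ∀ t, |t| ≤ Real.pi → g t ≤ h t + ε) (h2 : ∀ t, Real.pi < |t| → 0 ≤ h t) (hε : 0 ≤ ε):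
    ∫ t in (-Real.pi)..Real.pi, g t ≤ (∫ t, h t) + 2 * Real.pi * ε := by
  have hpi := Real.pi_pos
  have hle : -Real.pi ≤ Real.pi := by linarith
  have hi : IntervalIntegrable h MeasureTheory.volume (-Real.pi) Real.pi := hh.intervalIntegrable
  have s1 : ∫ t in (-Real.pi)..Real.pi, g t ≤ ∫ t in (-Real.pi)..Real.pi, (h t + ε) := by
    apply intervalIntegral.integral_mono_on hle (hg.intervalIntegrable _ _) (hi.add intervalIntegrable_const)
    intro t ht
    exact h1 t (abs_le.2 ht)
  rw [intervalIntegral.integral_add hi intervalIntegrable_const, intervalIntegral.integral_const, smul_eq_mul] at s1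
  have s2 : ∫ t in (-Real.pi)..Real.pi, h t ≤ ∫ t, h t := by
    rw [intervalIntegral.integral_of_le hle, ← MeasureTheory.integral_Icc_eq_integral_Ioc,
      ← MeasureTheory.integral_add_compl (s := Set.Icc (-Real.pi) Real.pi) measurableSet_Icc hh]
    have : 0 ≤ ∫ t in (Set.Icc (-Real.pi) Real.pi)ᶜ, h t := by
      apply MeasureTheory.setIntegral_nonneg measurableSet_Icc.compl
      intro t ht
      apply h2
      by_contra hc
      push Not at hc
      exact ht (abs_le.1 hc)
    linarith
  linarith

theorem gfun_cont (w : ℝ) (n : ℕ) : Continuous (fun t => (gfun w n t).re) := by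
  unfold gfun
  fun_prop

theorem J_upper (w : ℝ) (n : ℕ) (hw : 9/2 ≤ w) (hN : w * Real.exp w = n) :
    ∫ t in (-Real.pi)..Real.pi, (gfun w n t).re ≤
     (1 + 3*(n*(1+7*w+6*w^2+w^3)/24)/(2*(n*(1+w)/2))^2 + 15*(-(n^2*(1+3*w+w^2)^2/72))/(2*(n*(1+w)/2))^3
       + 105*(n^2*(1+3*w+w^2)*(1 + 15*w + 25*w^2 + 10*w^3 + w^4)/720)/(2*(n*(1+w)/2))^4
       + 10395*(n^4*(1+3*w+w^2)^4/20736)/(2*(n*(1+w)/2))^6) * Real.sqrt (Real.pi / (n*(1+w)/2))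
     + (105*(n^2*(1+7*w+6*w^2+w^3)^2/1152)/(2*(7/10*(n*(1+w)/2)))^4 + 945*0/(2*(7/10*(n*(1+w)/2)))^5) * Real.sqrt (Real.pi / (7/10*(n*(1+w)/2)))
     + 2 * Real.pi * Real.exp (-(709/1000 * Real.exp w / w)) := by
  have hw0 : 0 < w := by linarith
  have hn0 : (0:ℝ) < n := by rw [← hN]; positivity
  obtain ⟨hI, hE⟩ := gauss_poly (n*(1+w)/2) (by positivity) 1 (n*(1+7*w+6*w^2+w^3)/24) (-(n^2*(1+3*w+w^2)^2/72))
    (n^2*(1+3*w+w^2)*(1 + 15*w + 25*w^2 + 10*w^3 + w^4)/720) (n^4*(1+3*w+w^2)^4/20736)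
    (n^2*(1+7*w+6*w^2+w^3)^2/1152) 0
  rw [← hE]
  have key : ∀ t : ℝ, (1 + n*(1+7*w+6*w^2+w^3)/24*t^4 + (-(n^2*(1+3*w+w^2)^2/72))*t^6 + (n^2*(1+3*w+w^2)*(1 + 15*w + 25*w^2 + 10*w^3 + w^4)/720)*t^8
      + (n^4*(1+3*w+w^2)^4/20736)*t^12) * Real.exp (-(n*(1+w)/2) * t^2)
      + ((n^2*(1+7*w+6*w^2+w^3)^2/1152)*t^8 + 0*t^10) * Real.exp (-(7/10*(n*(1+w)/2)) * t^2) = 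
      Real.exp (-(n*(1+w)/2) * |t|^2) * ((1 - (n*(1+3*w+w^2)*|t|^3/6)^2/4)^2 + n*(1+7*w+6*w^2+w^3)*|t|^4/24
      + (n*(1+3*w+w^2)*|t|^3/6)*(n*(1 + 15*w + 25*w^2 + 10*w^3 + w^4)*|t|^5/120))
     + (n*(1+7*w+6*w^2+w^3)*|t|^4/24)^2/2 * Real.exp (-(7/10*(n*(1+w)/2)) * |t|^2) := by
    intro t
    have e2 : t^2 = |t|^2 := (sq_abs t).symm
    rw [show t^4 = (t^2)^2 by ring, show t^6 = (t^2)^3 by ring, show t^8 = (t^2)^4 by ring, show t^12 = (t^2)^6 by ring, show t^10 = (t^2)^5 by ring, e2]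
    ring
  have hnn : ∀ t : ℝ, 0 ≤ (1 + n*(1+7*w+6*w^2+w^3)/24*t^4 + (-(n^2*(1+3*w+w^2)^2/72))*t^6 + (n^2*(1+3*w+w^2)*(1 + 15*w + 25*w^2 + 10*w^3 + w^4)/720)*t^8
      + (n^4*(1+3*w+w^2)^4/20736)*t^12) * Real.exp (-(n*(1+w)/2) * t^2)
      + ((n^2*(1+7*w+6*w^2+w^3)^2/1152)*t^8 + 0*t^10) * Real.exp (-(7/10*(n*(1+w)/2)) * t^2) := by
    intro t; rw [key]; positivity
  apply int_bound _ _ _ (gfun_cont w n) hI _ _ (Real.exp_pos _).le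
  · intro t ht
    show (gfun w n t).re ≤ _
    rw [← gfun_re_abs]
    by_cases h : |t| ≤ 5/(4*w)
    · have := (g_upper w |t| n hw (abs_nonneg t) h hN).1
      rw [key]
      have := Real.exp_pos (-(709/1000 * Real.exp w / w))
      linarith
    · push Not at h
      have := (abs_le.1 (g_far w |t| n hw h.le ht)).2
      have := hnn t
      linarith
  · intro t _
    exact hnn t

theorem J_lower (w : ℝ) (n : ℕ) (hw : 9/2 ≤ w) (hN : w * Real.exp w = n) :
     (1 + 3*(n*(1+7*w+6*w^2+w^3)/24)/(2*(n*(1+w)/2))^2 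
       + 15*(-(n^2*(1+3*w+w^2)^2/72 + n*(1 + 31*w + 90*w^2 + 65*w^3 + 15*w^4 + w^5)/720))/(2*(n*(1+w)/2))^3
       + 105*(-(4*w/5)^8)/(2*(n*(1+w)/2))^4
       + 10395*(-((4*w/5)^8*(n*(1+7*w+6*w^2+w^3)/24)))/(2*(n*(1+w)/2))^6) * Real.sqrt (Real.pi / (n*(1+w)/2))
     + (105*0/(2*(7/10*(n*(1+w)/2)))^4 + 945*(-(n^3*(1+7*w+6*w^2+w^3)*(1+3*w+w^2)^2/1728))/(2*(7/10*(n*(1+w)/2)))^5) * Real.sqrt (Real.pi / (7/10*(n*(1+w)/2)))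
     - 2 * Real.pi * Real.exp (-(709/1000 * Real.exp w / w)) ≤ ∫ t in (-Real.pi)..Real.pi, (gfun w n t).re := by
  have hw0 : 0 < w := by linarith
  have hn0 : (0:ℝ) < n := by rw [← hN]; positivity
  obtain ⟨hI, hE⟩ := gauss_poly (n*(1+w)/2) (by positivity) 1 (n*(1+7*w+6*w^2+w^3)/24) 
    (-(n^2*(1+3*w+w^2)^2/72 + n*(1 + 31*w + 90*w^2 + 65*w^3 + 15*w^4 + w^5)/720))
    (-(4*w/5)^8) (-((4*w/5)^8*(n*(1+7*w+6*w^2+w^3)/24)))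
    0 (-(n^3*(1+7*w+6*w^2+w^3)*(1+3*w+w^2)^2/1728))
  rw [← hE]
  set F : ℝ → ℝ := fun t => (1 + n*(1+7*w+6*w^2+w^3)/24*t^4 + (-(n^2*(1+3*w+w^2)^2/72 + n*(1 + 31*w + 90*w^2 + 65*w^3 + 15*w^4 + w^5)/720))*t^6 + (-(4*w/5)^8)*t^8
      + (-((4*w/5)^8*(n*(1+7*w+6*w^2+w^3)/24)))*t^12) * Real.exp (-(n*(1+w)/2) * t^2)
      + (0*t^8 + (-(n^3*(1+7*w+6*w^2+w^3)*(1+3*w+w^2)^2/1728))*t^10) * Real.exp (-(7/10*(n*(1+w)/2)) * t^2) with hF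
  have key : ∀ t : ℝ, F t = 
    Real.exp (-(n*(1+w)/2) * |t|^2) * (1 + n*(1+7*w+6*w^2+w^3)*|t|^4/24 - n*(1 + 31*w + 90*w^2 + 65*w^3 + 15*w^4 + w^5)*|t|^6/720
      - (n*(1+3*w+w^2)*|t|^3/6)^2/2)
     - (n*(1+7*w+6*w^2+w^3)*|t|^4/24)*((n*(1+3*w+w^2)*|t|^3/6)^2/2) * Real.exp (-(7/10*(n*(1+w)/2)) * |t|^2)
     - (1 + n*(1+7*w+6*w^2+w^3)*|t|^4/24) * (4*w/5*|t|)^8 * Real.exp (-(n*(1+w)/2) * |t|^2) := by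
    intro t
    have e2 : t^2 = |t|^2 := (sq_abs t).symm
    rw [hF]
    simp only
    rw [show t^4 = (t^2)^2 by ring, show t^6 = (t^2)^3 by ring, show t^8 = (t^2)^4 by ring, show t^12 = (t^2)^6 by ring, show t^10 = (t^2)^5 by ring, e2]
    ring
  have hnp : ∀ t : ℝ, 5/(4*w) < |t| → F t ≤ 0 := by
    intro t ht
    rw [key]
    have h1 : 1 ≤ 4*w/5*|t| := by
      rw [div_lt_iff₀ (by positivity)] at ht; linarith
    have h2 : 1 ≤ (4*w/5*|t|)^8 := one_le_pow₀ h1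
    have h3 : (1 + n*(1+7*w+6*w^2+w^3)*|t|^4/24) * 1 * Real.exp (-(n*(1+w)/2) * |t|^2) ≤ (1 + n*(1+7*w+6*w^2+w^3)*|t|^4/24) * (4*w/5*|t|)^8 * Real.exp (-(n*(1+w)/2) * |t|^2) := by
      gcongr
    have h4 : 0 ≤ (n*(1+7*w+6*w^2+w^3)*|t|^4/24)*((n*(1+3*w+w^2)*|t|^3/6)^2/2) * Real.exp (-(7/10*(n*(1+w)/2)) * |t|^2) := by positivity
    have h5 : 0 ≤ Real.exp (-(n*(1+w)/2) * |t|^2) * (n*(1 + 31*w + 90*w^2 + 65*w^3 + 15*w^4 + w^5)*|t|^6/720) := by positivity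
    have h6 : 0 ≤ Real.exp (-(n*(1+w)/2) * |t|^2) * ((n*(1+3*w+w^2)*|t|^3/6)^2/2) := by positivity
    linarith
  have hb := int_bound (fun t => -(gfun w n t).re) (fun t => -F t) (Real.exp (-(709/1000 * Real.exp w / w))) (gfun_cont w n).neg hI.neg
    (by
      intro t ht
      show -(gfun w n t).re ≤ _
      rw [← gfun_re_abs]
      have := Real.exp_pos (-(709/1000 * Real.exp w / w))
      by_cases h : |t| ≤ 5/(4*w)
      · have := (g_upper w |t| n hw (abs_nonneg t) h hN).2
        rw [key]
        have h4 : 0 ≤ (1 + n*(1+7*w+6*w^2+w^3)*|t|^4/24) * (4*w/5*|t|)^8 * Real.exp (-(n*(1+w)/2) * |t|^2) := by positivity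
        linarith
      · push Not at h
        have := (abs_le.1 (g_far w |t| n hw h.le ht)).1
        have := hnp t h
        linarith)
    (by
      intro t ht
      have h3 := Real.pi_gt_three
      have : 5/(4*w) ≤ 1 := by rw [div_le_one (by positivity)]; linarith
      have := hnp t (by linarith)
      linarith) (Real.exp_pos _).le
  rw [intervalIntegral.integral_neg, MeasureTheory.integral_neg] at hb
  linarith

theorem exp92 : (90:ℝ) ≤ Real.exp (9/2) := by
  have h1 := Real.exp_one_gt_d9
  have h2 : (Real.exp (9/2))^2 = (Real.exp 1)^9 := by
    rw [← Real.exp_nat_mul, ← Real.exp_nat_mul]; norm_num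
  have h3 : (2.7182818283:ℝ)^9 ≤ (Real.exp 1)^9 := by gcongr
  rw [← h2] at h3
  have h4 := Real.exp_pos (9/2)
  refine le_of_sq_le_sq ?_ h4.le
  refine le_trans ?_ h3
  norm_num

theorem expw (w : ℝ) (hw : 9/2 ≤ w) : 90 * (1 + (w-9/2) + (w-9/2)^2/2) ≤ Real.exp w := by
  have h := Real.quadratic_le_exp_of_nonneg (sub_nonneg.2 hw)
  have : Real.exp w = Real.exp (9/2) * Real.exp (w - 9/2) := by rw [← Real.exp_add]; congr 1; ring
  rw [this]
  have := exp92
  have := Real.exp_pos (w-9/2)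
  have h0 : 0 ≤ 1 + (w-9/2) + (w-9/2)^2/2 := by nlinarith
  gcongr

theorem tail_bound (w : ℝ) (N : ℝ) (hw : 9/2 ≤ w) (hN : w * Real.exp w = N) :
    2 * Real.pi * Real.exp (-(709/1000 * Real.exp w / w)) ≤ 1/10/N * Real.sqrt (Real.pi / (N*(1+w)/2)) := by
  have hw0 : 0 < w := by linarith
  have hN0 : 0 < N := by rw [← hN]; positivity
  have hpi := Real.pi_pos
  have hpi2 := Real.pi_lt_d2
  obtain ⟨x, hx⟩ : ∃ x, x = w - 9/2 := ⟨_, rfl⟩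
  have hx0 : 0 ≤ x := by linarith
  have he := expw w hw
  rw [← hx] at he
  have hD : 14.18 + 9.9*x ≤ 709/1000 * Real.exp w / w := by
    rw [le_div_iff₀ hw0]
    have : w = 9/2 + x := by linarith
    rw [this] at he ⊢
    nlinarith
  have hX := Real.add_one_le_exp x
  have hw1 : w ≤ 9/2 * Real.exp x := by linarith
  have hv1 : 1 + w ≤ 11/2 * Real.exp x := by linarith
  have h13 : (400000:ℝ) ≤ Real.exp 13 := by
    have h1 := Real.exp_one_gt_d9
    have h2 : Real.exp 13 = (Real.exp 1)^13 := by rw [← Real.exp_nat_mul]; norm_num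
    rw [h2]
    calc (400000:ℝ) ≤ 2.7^13 := by norm_num
      _ ≤ _ := by gcongr; linarith
  have key : 200 * Real.pi * N^3 * (1+w) ≤ Real.exp (2*(709/1000 * Real.exp w / w)) := by
    calc 200 * Real.pi * N^3 * (1+w) ≤ 200 * 3.15 * N^3 * (1+w) := by gcongr
      _ = 630 * (w^3 * (Real.exp w)^3) * (1+w) := by rw [← hN]; ring
      _ ≤ 630 * ((9/2 * Real.exp x)^3 * (Real.exp w)^3) * (11/2 * Real.exp x) := by gcongr
      _ ≤ 400000 * (Real.exp x)^4 * (Real.exp w)^3 := by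
          have : 0 ≤ (Real.exp x)^4 * (Real.exp w)^3 := by positivity
          nlinarith
      _ ≤ Real.exp 13 * (Real.exp x)^4 * (Real.exp w)^3 := by gcongr
      _ = Real.exp (13 + 4*x + 3*w) := by
          rw [← Real.exp_nat_mul, ← Real.exp_nat_mul, ← Real.exp_add, ← Real.exp_add]; norm_num
      _ ≤ _ := by apply Real.exp_le_exp.2; linarith
  obtain ⟨D, hDD⟩ : ∃ D, D = 709/1000 * Real.exp w / w := ⟨_, rfl⟩
  rw [← hDD] at key ⊢
  have e2 : Real.exp (2*D) = (Real.exp D)^2 := by rw [← Real.exp_nat_mul]; norm_num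
  rw [e2] at key
  have pD := Real.exp_pos D
  have : 20 * Real.pi * N / Real.exp D ≤ Real.sqrt (Real.pi / (N*(1+w)/2)) := by
    apply Real.le_sqrt_of_sq_le
    rw [div_pow, div_le_div_iff₀ (by positivity) (by positivity)]
    nlinarith [mul_le_mul_of_nonneg_left key hpi.le]
  calc 2 * Real.pi * Real.exp (-D) = 1/10/N * (20 * Real.pi * N / Real.exp D) := by
        rw [Real.exp_neg]; field_simp; ring
    _ ≤ _ := by gcongr

theorem sqrt107 (b : ℝ) (hb : 0 < b) : Real.sqrt (Real.pi / (7/10*b)) ≤ 1.1953 * Real.sqrt (Real.pi/b) := by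
  rw [show Real.pi / (7/10*b) = (10/7) * (Real.pi / b) by field_simp, Real.sqrt_mul (by norm_num)]
  gcongr
  rw [Real.sqrt_le_left (by norm_num)]
  norm_num

theorem Nbig (w N : ℝ) (hw : 9/2 ≤ w) (hN : w * Real.exp w = N) : 13.38 * (1+w)^2 ≤ N := by
  have he := expw w hw
  rw [← hN]
  have : w * (90 * (1 + (w-9/2) + (w-9/2)^2/2)) ≤ w * Real.exp w := by gcongr
  obtain ⟨x, hx⟩ : ∃ x, x = w - 9/2 := ⟨_, rfl⟩
  have hx0 : 0 ≤ x := by linarith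
  have : w = 9/2 + x := by linarith
  subst this
  nlinarith [mul_nonneg hx0 hx0, mul_nonneg (mul_nonneg hx0 hx0) hx0]

theorem polys (w : ℝ) (hw : 9/2 ≤ w) : (1+3*w+w^2) ≤ 1.1488*(1+w)^2 ∧ (1+7*w+6*w^2+w^3) ≤ 1.4734*(1+w)^3 ∧
    (1 + 15*w + 25*w^2 + 10*w^3 + w^4) ≤ 2.0721*(1+w)^4 ∧ 
    (1 + 31*w + 90*w^2 + 65*w^3 + 15*w^4 + w^5) ≤ 3.1558*(1+w)^5 := by
  obtain ⟨x, hx⟩ : ∃ x, x = w - 9/2 := ⟨_, rfl⟩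
  have hx0 : 0 ≤ x := by linarith
  have : w = 9/2 + x := by linarith
  subst this
  have h2 : 0 ≤ x^2 := by positivity
  have h3 : 0 ≤ x^3 := by positivity
  have h4 : 0 ≤ x^4 := by positivity
  have h5 : 0 ≤ x^5 := by positivity
  refine ⟨?_, ?_, ?_, ?_⟩ <;> ring_nf <;> linarith

theorem f_bounds (w : ℝ) (hw : 9/2 ≤ w) :
    0.49 * (1+w)^3 ≤ 5/24*(1+3*w+w^2)^2 - (1+7*w+6*w^2+w^3)*(1+w)/8 ∧
    5/24*(1+3*w+w^2)^2 - (1+7*w+6*w^2+w^3)*(1+w)/8 ≤ ((w + 3/2)/5 - 0.68) * (1+w)^3 := by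
  obtain ⟨x, hx⟩ : ∃ x, x = w - 9/2 := ⟨_, rfl⟩
  have hx0 : 0 ≤ x := by linarith
  have : w = 9/2 + x := by linarith
  subst this
  have h2 : 0 ≤ x^2 := by positivity
  have h3 : 0 ≤ x^3 := by positivity
  have h4 : 0 ≤ x^4 := by positivity
  constructor <;> ring_nf <;> linarith

theorem J_up (w : ℝ) (n : ℕ) (hw : 9/2 ≤ w) (hN : w * Real.exp w = n) :
    ∫ t in (-Real.pi)..Real.pi, (gfun w n t).re ≤ (1 - 1/(12*n)) * Real.sqrt (Real.pi / (n*(1+w)/2)) := by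
  have hJ := J_upper w n hw hN
  have hT := tail_bound w n hw hN
  have hB := Nbig w n hw hN
  obtain ⟨N, hNN⟩ : ∃ N : ℝ, N = n := ⟨_, rfl⟩
  rw [← hNN] at hJ hT hB ⊢
  obtain ⟨q3, q4, q5, q6⟩ := polys w hw
  obtain ⟨f1, f2⟩ := f_bounds w hw
  have hw0 : 0 < w := by linarith
  obtain ⟨p3, h3⟩ : ∃ p, p = 1+3*w+w^2 := ⟨_, rfl⟩
  obtain ⟨p4, h4⟩ : ∃ p, p = 1+7*w+6*w^2+w^3 := ⟨_, rfl⟩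
  obtain ⟨p5, h5⟩ : ∃ p, p = 1 + 15*w + 25*w^2 + 10*w^3 + w^4 := ⟨_, rfl⟩
  have p30 : 0 ≤ p3 := by rw [h3]; positivity
  have p40 : 0 ≤ p4 := by rw [h4]; positivity
  have p50 : 0 ≤ p5 := by rw [h5]; positivity
  rw [← h3, ← h4, ← h5] at hJ
  rw [← h3] at q3
  rw [← h4] at q4
  rw [← h5] at q5
  rw [← h3, ← h4] at f1
  obtain ⟨v, hv⟩ : ∃ v, v = 1 + w := ⟨_, rfl⟩
  rw [← hv] at hJ hT hB q3 q4 q5 f1 ⊢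
  clear q6 f2 h3 h4 h5
  have hv0 : 0 < v := by linarith
  have hN0 : 0 < N := lt_of_lt_of_le (by positivity) hB
  have hb : 0 < N*v/2 := by positivity
  have hs := sqrt107 (N*v/2) hb
  set Z := Real.sqrt (Real.pi / (N*v/2))
  set Z' := Real.sqrt (Real.pi / (7/10*(N*v/2)))
  have hZ0 : 0 ≤ Z := Real.sqrt_nonneg _
  have t1 : 3*(N*p4/24)/(2*(N*v/2))^2 + 15*(-(N^2*p3^2/72))/(2*(N*v/2))^3 ≤ -(0.49/N) := by
    have : 3*(N*p4/24)/(2*(N*v/2))^2 + 15*(-(N^2*p3^2/72))/(2*(N*v/2))^3 = -((5/24*p3^2 - p4*v/8)/v^3/N) := by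
      field_simp; ring
    rw [this]
    apply neg_le_neg
    gcongr
    rw [le_div_iff₀ (by positivity)]
    exact f1
  have hr : v^2/N^2 ≤ 1/13.38/N := by
    rw [div_le_div_iff₀ (by positivity) hN0]
    have := mul_le_mul_of_nonneg_right hB hN0.le
    linarith
  have t2 : 105*(N^2*p3*p5/720)/(2*(N*v/2))^4 ≤ 0.3473*(v^2/N^2) := by
    calc _ ≤ 105*(N^2*(1.1488*v^2)*(2.0721*v^4)/720)/(2*(N*v/2))^4 := by gcongr
      _ = (105*1.1488*2.0721/720)*(v^2/N^2) := by field_simp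
      _ ≤ _ := by gcongr; norm_num
  have t3 : 10395*(N^4*p3^4/20736)/(2*(N*v/2))^6 ≤ 0.8733*(v^2/N^2) := by
    calc _ ≤ 10395*(N^4*(1.1488*v^2)^4/20736)/(2*(N*v/2))^6 := by gcongr
      _ = (10395*1.1488^4/20736)*(v^2/N^2) := by field_simp
      _ ≤ _ := by gcongr; norm_num
  have t4 : 105*(N^2*p4^2/1152)/(2*(7/10*(N*v/2)))^4 ≤ 0.8242*(v^2/N^2) := by
    calc _ ≤ 105*(N^2*(1.4734*v^3)^2/1152)/(2*(7/10*(N*v/2)))^4 := by gcongr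
      _ = (105*1.4734^2/1152/(7/10)^4)*(v^2/N^2) := by field_simp
      _ ≤ _ := by gcongr; norm_num
  have hr0 : 0 ≤ v^2/N^2 := by positivity
  have t5 : (105*(N^2*p4^2/1152)/(2*(7/10*(N*v/2)))^4 + 945*0/(2*(7/10*(N*v/2)))^5) * Z' ≤ 0.9852*(v^2/N^2) * Z := by
    calc _ = (105*(N^2*p4^2/1152)/(2*(7/10*(N*v/2)))^4) * Z' := by ring
      _ ≤ (0.8242*(v^2/N^2)) * (1.1953*Z) := by gcongr
      _ = (0.8242*1.1953)*((v^2/N^2)*Z) := by ring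
      _ ≤ 0.9852 * ((v^2/N^2)*Z) := by gcongr; norm_num
      _ = _ := by ring
  have t6 : (1 + 3*(N*p4/24)/(2*(N*v/2))^2 + 15*(-(N^2*p3^2/72))/(2*(N*v/2))^3 + 105*(N^2*p3*p5/720)/(2*(N*v/2))^4
     + 10395*(N^4*p3^4/20736)/(2*(N*v/2))^6)*Z ≤ (1 - 0.49/N + 1.2206*(v^2/N^2)) * Z := by
    apply mul_le_mul_of_nonneg_right _ hZ0
    linarith
  have t7 : (1 - 0.49/N + 1.2206*(v^2/N^2)) * Z + 0.9852*(v^2/N^2) * Z + 1/10/N*Z ≤ (1 - 1/(12*N))*Z := by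
    have : (1 - 0.49/N + 1.2206*(v^2/N^2)) + 0.9852*(v^2/N^2) + 1/10/N ≤ (1 - 1/(12*N)) := by
      have e1 : 0.49/N = 0.49*(1/N) := by ring
      have e2 : 1/10/N = 1/10*(1/N) := by ring
      have e3 : 1/(12*N) = 1/12*(1/N) := by field_simp
      have e4 : 1/13.38/N = 1/13.38*(1/N) := by ring
      have : 0 < 1/N := by positivity
      rw [e1, e2, e3]
      rw [e4] at hr
      linarith
    nlinarith [mul_le_mul_of_nonneg_right this hZ0]
  linarith

theorem J_lo (w : ℝ) (n : ℕ) (hw : 9/2 ≤ w) (hN : w * Real.exp w = n) :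
    (1 - (w+3/2)/(5*n)) * Real.sqrt (Real.pi / (n*(1+w)/2)) ≤ ∫ t in (-Real.pi)..Real.pi, (gfun w n t).re := by
  have hJ := J_lower w n hw hN
  have hT := tail_bound w n hw hN
  have hB := Nbig w n hw hN
  obtain ⟨N, hNN⟩ : ∃ N : ℝ, N = n := ⟨_, rfl⟩
  rw [← hNN] at hJ hT hB ⊢
  obtain ⟨q3, q4, q5, q6⟩ := polys w hw
  obtain ⟨f1, f2⟩ := f_bounds w hw
  have hw0 : 0 < w := by linarith
  obtain ⟨p3, h3⟩ : ∃ p, p = 1+3*w+w^2 := ⟨_, rfl⟩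
  obtain ⟨p4, h4⟩ : ∃ p, p = 1+7*w+6*w^2+w^3 := ⟨_, rfl⟩
  obtain ⟨p6, h6⟩ : ∃ p, p = 1 + 31*w + 90*w^2 + 65*w^3 + 15*w^4 + w^5 := ⟨_, rfl⟩
  have p30 : 0 ≤ p3 := by rw [h3]; positivity
  have p40 : 0 ≤ p4 := by rw [h4]; positivity
  have p60 : 0 ≤ p6 := by rw [h6]; positivity
  rw [← h3, ← h4, ← h6] at hJ
  rw [← h3] at q3
  rw [← h4] at q4
  rw [← h6] at q6
  rw [← h3, ← h4] at f2
  obtain ⟨v, hv⟩ : ∃ v, v = 1 + w := ⟨_, rfl⟩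
  rw [← hv] at hJ hT hB q3 q4 q6 f2 ⊢
  clear q5 f1 h3 h4 h6
  have hv0 : 0 < v := by linarith
  have hv1 : 11/2 ≤ v := by linarith
  have hwv : w ≤ v := by linarith
  have hN0 : 0 < N := lt_of_lt_of_le (by positivity) hB
  have hb : 0 < N*v/2 := by positivity
  have hs := sqrt107 (N*v/2) hb
  set Z := Real.sqrt (Real.pi / (N*v/2))
  set Z' := Real.sqrt (Real.pi / (7/10*(N*v/2)))
  have hZ0 : 0 ≤ Z := Real.sqrt_nonneg _
  have hr : v^2/N^2 ≤ 1/13.38/N := by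
    rw [div_le_div_iff₀ (by positivity) hN0]
    have := mul_le_mul_of_nonneg_right hB hN0.le
    linarith
  have hr0 : 0 ≤ v^2/N^2 := by positivity
  have hu : v^2/N ≤ 1/13.38 := by
    rw [div_le_div_iff₀ hN0 (by norm_num)]; linarith
  have hu0 : 0 ≤ v^2/N := by positivity
  have hvN : 400 ≤ N := by nlinarith
  have hNi : 1/N^2 ≤ 0.0025*(1/N) := by
    rw [mul_one_div, div_le_div_iff₀ (by positivity) hN0]
    nlinarith
  have t1 : 5/24*(p3^2/v^3/N) - p4/v^2/8/N ≤ ((w + 3/2)/5 - 0.68)/N := by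
    have : 5/24*(p3^2/v^3/N) - p4/v^2/8/N = (5/24*p3^2 - p4*v/8)/v^3/N := by
      field_simp
    rw [this]
    gcongr
    rw [div_le_iff₀ (by positivity)]
    exact f2
  have e0 : 3*(N*p4/24)/(2*(N*v/2))^2 = p4/v^2/8/N := by field_simp; ring
  have e1 : 15*(-(N^2*p3^2/72 + N*p6/720))/(2*(N*v/2))^3 = -(5/24*(p3^2/v^3/N)) - N*p6/48/(N*v)^3 := by field_simp; ring
  have t2 : N*p6/48/(N*v)^3 ≤ 0.0658*(v^2/N^2) := by
    calc _ ≤ N*(3.1558*v^5)/48/(N*v)^3 := by gcongr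
      _ = (3.1558/48)*(v^2/N^2) := by field_simp
      _ ≤ _ := by gcongr; norm_num
  have t3 : 105*(4*w/5)^8/(2*(N*v/2))^4 ≤ 0.1 * (1/N^2) := by
    calc _ ≤ 105*(4*v/5)^8/(2*(N*v/2))^4 := by gcongr
      _ = (105*(4/5)^8)*(v^2/N)^2*(1/N^2) := by field_simp
      _ ≤ (105*(4/5)^8)*(1/13.38)^2*(1/N^2) := by gcongr
      _ ≤ _ := by gcongr; norm_num
  have t4 : 10395*((4*w/5)^8*(N*p4/24))/(2*(N*v/2))^6 ≤ 0.05 * (1/N^2) := by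
    calc _ ≤ 10395*((4*v/5)^8*(N*(1.4734*v^3)/24))/(2*(N*v/2))^6 := by gcongr
      _ = (10395*(4/5)^8*1.4734/24)*v^5/N^3*(1/N^2) := by field_simp
      _ ≤ (10395*(4/5)^8*1.4734/24)*v^6/N^3*(1/N^2) := by
          gcongr
          · linarith
          · norm_num
      _ = (10395*(4/5)^8*1.4734/24)*(v^2/N)^3*(1/N^2) := by field_simp
      _ ≤ (10395*(4/5)^8*1.4734/24)*(1/13.38)^3*(1/N^2) := by gcongr
      _ ≤ _ := by gcongr; norm_num
  have t5 : 945*(N^3*p4*p3^2/1728)/(2*(7/10*(N*v/2)))^5 ≤ 6.328*(v^2/N^2) := by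
    calc _ ≤ 945*(N^3*(1.4734*v^3)*(1.1488*v^2)^2/1728)/(2*(7/10*(N*v/2)))^5 := by gcongr
      _ = (945*1.4734*1.1488^2/1728/(7/10)^5)*(v^2/N^2) := by field_simp
      _ ≤ _ := by gcongr; norm_num
  have t6 : (945*(N^3*p4*p3^2/1728)/(2*(7/10*(N*v/2)))^5) * Z' ≤ 7.564*(v^2/N^2) * Z := by
    calc _ ≤ (6.328*(v^2/N^2)) * (1.1953*Z) := by gcongr
      _ = (6.328*1.1953)*((v^2/N^2)*Z) := by ring
      _ ≤ 7.564 * ((v^2/N^2)*Z) := by gcongr; norm_num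
      _ = _ := by ring
  have e3 : (105*0/(2*(7/10*(N*v/2)))^4 + 945*(-(N^3*p4*p3^2/1728))/(2*(7/10*(N*v/2)))^5) * Z' = -((945*(N^3*p4*p3^2/1728)/(2*(7/10*(N*v/2)))^5) * Z') := by ring
  have e4 : 105*(-(4*w/5)^8)/(2*(N*v/2))^4 = -(105*(4*w/5)^8/(2*(N*v/2))^4) := by ring
  have e5 : 10395*(-((4*w/5)^8*(N*p4/24)))/(2*(N*v/2))^6 = -(10395*((4*w/5)^8*(N*p4/24))/(2*(N*v/2))^6) := by ring
  rw [e0, e1, e3, e4, e5] at hJ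
  have t7 : (1 - (w+3/2)/(5*N)) * Z ≤ (1 + p4/v^2/8/N + (-(5/24*(p3^2/v^3/N)) - N*p6/48/(N*v)^3) + -(105*(4*w/5)^8/(2*(N*v/2))^4)
     + -(10395*((4*w/5)^8*(N*p4/24))/(2*(N*v/2))^6)) * Z - 7.564*(v^2/N^2) * Z - 1/10/N*Z := by
    rw [← sub_mul, ← sub_mul]
    apply mul_le_mul_of_nonneg_right _ hZ0
    have e1 : ((w + 3/2)/5 - 0.68)/N = (w+3/2)/(5*N) - 0.68*(1/N) := by field_simp
    have e2 : 1/10/N = 1/10*(1/N) := by ring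
    have e4 : 1/13.38/N = 1/13.38*(1/N) := by ring
    have : 0 < 1/N := by positivity
    rw [e1] at t1
    rw [e2]
    rw [e4] at hr
    linarith
  linarith

theorem Estar_eq (n : ℕ) (hn : 1 ≤ n) (w : ℝ) (hw : 0 < w) (hN : w * Real.exp w = n) (hwl : lambertW n = w) :
    Estar n = Real.sqrt (2 * Real.pi * n) * (n / Real.exp 1)^n / w ^ n * Real.exp (Real.exp w - 1) / (2 * Real.pi) *
      Real.sqrt (Real.pi / (n*(1+w)/2)) := by
  have hn0 : (0:ℝ) < n := by exact_mod_cast hn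
  have hpi := Real.pi_pos
  have h1 : Real.sqrt (2 * Real.pi * n) * Real.sqrt (Real.pi / (n*(1+w)/2)) = 2 * Real.pi / Real.sqrt (1+w) := by
    rw [← Real.sqrt_mul (by positivity), show 2 * Real.pi * n * (Real.pi / (n*(1+w)/2)) = (2*Real.pi)^2 / (1+w) by field_simp,
      Real.sqrt_div (by positivity), Real.sqrt_sq (by positivity)]
  have h2 : ((n:ℝ) / Real.exp 1)^n / w^n = Real.exp (n * w - n) := by
    rw [← div_pow, ← hN, show w * Real.exp w / Real.exp 1 / w = Real.exp (w - 1) by rw [Real.exp_sub]; field_simp,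
      ← Real.exp_nat_mul]
    congr 1
    rw [hN]; ring
  have h3 : Real.exp (Real.exp w + n * w - (n+1)) = Real.exp (n * w - n) * Real.exp (Real.exp w - 1) := by
    rw [← Real.exp_add]; congr 1; ring
  rw [Estar, hwl, h3]
  calc _ = (2 * Real.pi / Real.sqrt (1+w)) * Real.exp (n * w - n) * Real.exp (Real.exp w - 1) / (2 * Real.pi) := by
        field_simp
    _ = _ := by rw [← h1, ← h2]; ring

theorem large_case (n : ℕ) (hn : 406 ≤ n) :
    (1 - Real.log n / (5 * (n : ℝ))) * Estar n ≤ (Bell n : ℝ) ∧ (Bell n : ℝ) ≤ Estar n := by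
  have hn1 : 1 ≤ n := by omega
  have hn0 : (0:ℝ) < n := by exact_mod_cast hn1
  have hnb : (406:ℝ) ≤ n := by exact_mod_cast hn
  have hpi := Real.pi_pos
  obtain ⟨hW, hW0⟩ := lambertW_spec n hn0
  have hw : 9/2 ≤ lambertW n := by
    apply lambertW_ge _ _ hn0
    have h1 := Real.exp_one_lt_d9
    have h2 : (Real.exp (9/2))^2 = (Real.exp 1)^9 := by
      rw [← Real.exp_nat_mul, ← Real.exp_nat_mul]; norm_num
    have h3 : (Real.exp 1)^9 ≤ (2.7182818286:ℝ)^9 := by gcongr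
    rw [← h2] at h3
    have h4 : Real.exp (9/2) ≤ 90.2 := by
      refine le_of_sq_le_sq ?_ (by norm_num)
      refine h3.trans ?_
      norm_num
    linarith
  obtain ⟨w, hwl⟩ : ∃ w, lambertW n = w := ⟨_, rfl⟩
  rw [hwl] at hW hW0 hw
  have hE := Estar_eq n hn1 w hW0 hW hwl
  have hB := bell_integral w hW0 n
  have hU := J_up w n hw hW
  have hL := J_lo w n hw hW
  have s1 := stirling_upper n hn1
  have s2 := Stirling.le_factorial_stirling n
  have hNb := Nbig w n hw hW
  set J := ∫ t in (-Real.pi)..Real.pi, (gfun w n t).re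
  set Z := Real.sqrt (Real.pi / (n*(1+w)/2))
  set s := Real.sqrt (2 * Real.pi * n) * (n / Real.exp 1)^n
  have hs0 : 0 ≤ s := by positivity
  have hZ0 : 0 ≤ Z := Real.sqrt_nonneg _
  obtain ⟨c, hc⟩ : ∃ c, c = 1 / w^n * Real.exp (Real.exp w - 1) / (2 * Real.pi) := ⟨_, rfl⟩
  have hc0 : 0 ≤ c := by rw [hc]; positivity
  have hE' : Estar n = c * (s * Z) := by rw [hE, hc]; ring
  have hB' : (Bell n : ℝ) = c * (n.factorial * J) := by rw [hB, hc]; ring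
  have hf0 : (0:ℝ) ≤ n.factorial := by positivity
  constructor
  · have hlog : Real.log n = w + Real.log w := by
      rw [← hW, Real.log_mul hW0.ne' (Real.exp_pos w).ne', Real.log_exp]; ring
    have hlw : 3/2 ≤ Real.log w := by
      rw [Real.le_log_iff_exp_le hW0]
      refine le_trans ?_ hw
      have h1 := Real.exp_one_lt_d9
      have h2 : (Real.exp (3/2))^2 = (Real.exp 1)^3 := by
        rw [← Real.exp_nat_mul, ← Real.exp_nat_mul]; norm_num
      have h3 : (Real.exp 1)^3 ≤ (2.7182818286:ℝ)^3 := by gcongr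
      rw [← h2] at h3
      refine le_of_sq_le_sq ?_ (by norm_num)
      refine h3.trans ?_
      norm_num
    have hq : (w+3/2)/(5*n) ≤ Real.log n/(5*n) := by
      rw [hlog]; gcongr
    have hq1 : (w+3/2)/(5*n) ≤ 1 := by
      rw [div_le_one (by positivity)]
      nlinarith
    rw [hE', hB']
    calc (1 - Real.log n/(5*n)) * (c * (s*Z)) ≤ (1 - (w+3/2)/(5*n)) * (c * (s*Z)) := by gcongr
      _ = c * (s * ((1 - (w+3/2)/(5*n)) * Z)) := by ring
      _ ≤ c * (n.factorial * ((1 - (w+3/2)/(5*n)) * Z)) := by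
          have : 0 ≤ (1 - (w+3/2)/(5*n)) * Z := mul_nonneg (by linarith) hZ0
          gcongr
      _ ≤ _ := by gcongr
  · rw [hE', hB']
    have hx : (0:ℝ) ≤ 1 - 1/(12*n) := by
      have : 1/(12*(n:ℝ)) ≤ 1 := by rw [div_le_one (by positivity)]; linarith
      linarith
    have hx2 : 1 - 1/(12*(n:ℝ)) ≤ Real.exp (-(1/(12*n))) := by
      have := Real.add_one_le_exp (-(1/(12*(n:ℝ))))
      linarith
    calc c * (n.factorial * J) ≤ c * (n.factorial * ((1 - 1/(12*n)) * Z)) := by gcongr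
      _ ≤ c * ((s * Real.exp (1/(12*n))) * (Real.exp (-(1/(12*n))) * Z)) := by gcongr
      _ = c * (s * (Real.exp (1/(12*n)) * Real.exp (-(1/(12*n)))) * Z) := by ring
      _ = c * (s * Z) := by rw [← Real.exp_add]; simp

def force {α : Type} (n : ℕ) (k : ℕ → α) : α := Nat.casesOn (motive := fun _ => α) n (k 0) (fun m => k (m+1))

noncomputable def nextRow (xs : List ℕ) : ℕ → (List ℕ → ℕ → Bool) → Bool :=
  List.rec (motive := fun _ => ℕ → (List ℕ → ℕ → Bool) → Bool)
    (fun acc k => k [acc] acc)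
    (fun x _ ih acc k => force (acc + x) (fun s => ih s (fun l last => k (acc :: l) last))) xs

noncomputable def tayQ (S Y k : ℕ) : ℕ := Nat.rec (motive := fun _ => ℕ) 1 (fun k q => q * ((k+1) * S) + Y^(k+1)) k

def SS : ℕ := 281474976710656
noncomputable def eLo (Y : ℕ) : ℕ := tayQ SS Y 15 * SS / (1307674368000 * SS^15)
noncomputable def eHi (Y : ℕ) : ℕ := eLo Y + 17

noncomputable def sqLo (k : ℕ) : ℕ → (ℕ → Bool) → Bool :=
  Nat.rec (motive := fun _ => ℕ → (ℕ → Bool) → Bool) (fun L c => c L)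
    (fun _ ih L c => force (L * L / SS) (fun L' => ih L' c)) k
noncomputable def sqHi (k : ℕ) : ℕ → (ℕ → Bool) → Bool :=
  Nat.rec (motive := fun _ => ℕ → (ℕ → Bool) → Bool) (fun L c => c L)
    (fun _ ih L c => force (L * L / SS + 1) (fun L' => ih L' c)) k

noncomputable def newt (n Y : ℕ) : ℕ :=
  force (8*Y) fun w => force ((eLo Y)^8 / SS^7) fun e => (w*w + n*SS^3/e)/(SS+w)/8

noncomputable def chk (n B Yl Yh : ℕ) : Bool :=
  (8*Yl*(eHi Yl)^8).ble (n*SS^9) && ((n*SS^9).ble (8*Yh*(eLo Yh)^8) && (Nat.ble 1 Yl && (Yl.ble SS &&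
  (force (n*SS^2/(8*Yh) + 8*n*Yl) (fun x => ((n+1)*SS).ble x &&
    force (eLo ((x-(n+1)*SS)/4096)) (fun L => sqLo 12 L fun L' => (B^2*(SS+8*Yh)*SS).ble (L'^2))) &&
  force ((n*SS^2/(8*Yl) + 1 + 8*n*Yh - (n+1)*SS)/4096 + 1) (fun y => y.ble SS &&
    force (eHi y) (fun H => sqHi 12 H fun H' => force (8*Yl + SS - (SS^2/(8*Yl) + 1)) fun v =>
      ((5*n*SS-v)^2*H'^2).ble (25*n^2*SS*B^2*(SS+8*Yl)*SS^2) ))))))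

noncomputable def loop (fuel : ℕ) : ℕ → List ℕ → ℕ → ℕ → Bool :=
  Nat.rec (motive := fun _ => ℕ → List ℕ → ℕ → ℕ → Bool) (fun _ _ _ _ => true)
   (fun _ ih n row last Y =>
     force (newt n Y) fun Y => force (newt n Y) fun Y => force (newt n Y) fun Y => force (newt n Y) fun Y =>
      (chk n (row.headD 0) (Y-256) (Y+256)) &&
       nextRow row last (fun row' last' => force (n+1) fun n' => ih n' row' last' Y)) fuel


theorem force_eq {α : Type} (n : ℕ) (k : ℕ → α) : force n k = k n := by
  cases n <;> rfl

noncomputable def aa (m : ℕ) : ℕ → ℕ := fun k => ∑ j ∈ Finset.range (k+1), k.choose j * Bell (m+j)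

theorem aa_zero (m : ℕ) : aa m 0 = Bell m := by simp [aa]

theorem aa_bell (n : ℕ) : aa 0 n = Bell (n+1) := by rw [bell_succ]; simp [aa]

theorem aa_succ (m k : ℕ) : aa m (k+1) = aa (m+1) k + aa m k := by
  unfold aa
  rw [Finset.sum_range_succ', Finset.sum_range_succ' (fun j => k.choose j * Bell (m+j)) k]
  simp only [Nat.choose_succ_succ, add_mul, Finset.sum_add_distrib]
  rw [Finset.sum_range_succ (fun x => k.choose (x+1) * Bell (m+(x+1)))]
  simp [add_assoc, add_comm 1]

noncomputable def suf : ℕ → ℕ → List ℕ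
  | 0, k => [aa 0 k]
  | m+1, k => aa (m+1) k :: suf m (k+1)

theorem nextRow_cons (x : ℕ) (xs : List ℕ) (acc : ℕ) (c : List ℕ → ℕ → Bool) :
    nextRow (x :: xs) acc c = nextRow xs (acc + x) (fun l last => c (acc :: l) last) := by
  have e : nextRow (x :: xs) acc c = force (acc + x) (fun s => nextRow xs s (fun l last => c (acc :: l) last)) := rfl
  rw [e, force_eq]

theorem nextRow_suf (m : ℕ) : ∀ (k : ℕ) (c : List ℕ → ℕ → Bool),
    nextRow (suf m k) (aa (m+1) k) c = c (suf (m+1) k) (aa 0 (m+1+k)) := by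
  induction m with
  | zero =>
    intro k c
    simp only [suf]
    rw [nextRow_cons]
    show c [aa 1 k, aa 1 k + aa 0 k] (aa 1 k + aa 0 k) = _
    have : aa 1 k + aa 0 k = aa 0 (k+1) := (aa_succ 0 k).symm
    rw [this]
    simp [add_comm]
  | succ m ih =>
    intro k c
    rw [suf, nextRow_cons, ← aa_succ, ih (k+1)]
    rw [show m + 1 + (k+1) = m + 1 + 1 + k by ring]
    rfl

theorem loop_succ (f n : ℕ) (row : List ℕ) (last Y : ℕ) : ∃ Y', loop (f+1) n row last Y =
    ((chk n (row.headD 0) (Y'-256) (Y'+256)) &&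
       nextRow row last (fun row' last' => force (n+1) fun n' => loop f n' row' last' Y')) := by
  refine ⟨newt n (newt n (newt n (newt n Y))), ?_⟩
  have e : loop (f+1) n row last Y = force (newt n Y) fun Y => force (newt n Y) fun Y => force (newt n Y) fun Y => force (newt n Y) fun Y =>
      (chk n (row.headD 0) (Y-256) (Y+256)) &&
       nextRow row last (fun row' last' => force (n+1) fun n' => loop f n' row' last' Y) := rfl
  rw [e]
  simp only [force_eq]

theorem suf_head (n : ℕ) : (suf n 0).headD 0 = Bell n := by
  cases n <;> simp [suf, aa_zero]

theorem loop_sound (f : ℕ) : ∀ n Y, loop f n (suf n 0) (aa 0 n) Y = true →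
    ∀ m, n ≤ m → m < n + f → ∃ Yl Yh, chk m (Bell m) Yl Yh = true := by
  induction f with
  | zero => intro n Y _ m h1 h2; omega
  | succ f ih =>
    intro n Y h m h1 h2
    obtain ⟨Y', hY⟩ := loop_succ f n (suf n 0) (aa 0 n) Y
    rw [hY, Bool.and_eq_true, suf_head] at h
    obtain ⟨hc, hr⟩ := h
    rcases h1.eq_or_lt with rfl | h1
    · exact ⟨_, _, hc⟩
    · rw [aa_bell, ← aa_zero, nextRow_suf, force_eq] at hr
      exact ih (n+1) Y' hr m h1 (by omega)

theorem SS_cast : (SS : ℝ) = 281474976710656 := by norm_num [SS]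

theorem SS_pos : (0:ℝ) < SS := by rw [SS_cast]; norm_num

theorem tayQ_eq (Y k : ℕ) : (tayQ SS Y k : ℝ) = k.factorial * (SS:ℝ)^k * ∑ m ∈ Finset.range (k+1), ((Y:ℝ)/SS)^m / m.factorial := by
  have hS := SS_pos
  induction k with
  | zero => simp [tayQ]
  | succ k ih =>
    have : tayQ SS Y (k+1) = tayQ SS Y k * ((k+1)*SS) + Y^(k+1) := rfl
    rw [this, Finset.sum_range_succ]
    push_cast
    rw [ih, mul_add, Nat.factorial_succ]
    push_cast
    have e : ((k:ℝ)+1) * k.factorial * (SS:ℝ)^(k+1) * (((Y:ℝ)/SS)^(k+1) / (((k:ℝ)+1) * k.factorial)) = (Y:ℝ)^(k+1) := by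
      rw [div_pow]; field_simp
    rw [e]
    ring

theorem eLo_le (Y : ℕ) : (eLo Y : ℝ) / SS ≤ Real.exp (Y/SS) := by
  have hS := SS_pos
  have h1 : (eLo Y : ℝ) ≤ _ := Nat.cast_div_le
  push_cast at h1
  rw [tayQ_eq] at h1
  refine le_trans ?_ (Real.sum_le_exp_of_nonneg (by positivity) 16)
  rw [div_le_iff₀ hS]
  refine h1.trans (le_of_eq ?_)
  have : ((15:ℕ).factorial : ℝ) = 1307674368000 := by norm_num [Nat.factorial]
  rw [this]
  field_simp

theorem le_eHi (Y : ℕ) (hY : Y ≤ SS) : Real.exp (Y/SS) ≤ (eHi Y : ℝ) / SS := by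
  have hS := SS_pos
  have hY1 : (Y:ℝ)/SS ≤ 1 := by rw [div_le_one hS]; exact_mod_cast hY
  have h0 : (0:ℝ) ≤ Y/SS := by positivity
  have h1 := Real.exp_bound' h0 hY1 (n := 16) (by norm_num)
  have h2 : ((tayQ SS Y 15 * SS : ℕ) : ℝ) / ((1307674368000 * SS^15 : ℕ) : ℝ) ≤ (eLo Y : ℝ) + 1 := by
    have := Nat.lt_floor_add_one (((tayQ SS Y 15 * SS : ℕ) : ℝ) / ((1307674368000 * SS^15 : ℕ) : ℝ))
    rw [Nat.floor_div_eq_div] at this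
    exact this.le
  push_cast at h2
  rw [tayQ_eq] at h2
  have : ((15:ℕ).factorial : ℝ) = 1307674368000 := by norm_num [Nat.factorial]
  rw [this] at h2
  have e : 1307674368000 * (SS:ℝ)^15 * (∑ m ∈ Finset.range (15+1), ((Y:ℝ)/SS)^m / m.factorial) * SS / (1307674368000 * (SS:ℝ)^15)
    = SS * ∑ m ∈ Finset.range 16, ((Y:ℝ)/SS)^m / m.factorial := by field_simp
  rw [e] at h2
  rw [le_div_iff₀ hS]
  have h3 : ((Y:ℝ)/SS)^16 ≤ 1 := pow_le_one₀ h0 hY1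
  have h4 : ((Y:ℝ)/SS)^16 * (((16:ℕ):ℝ)+1)/(((16:ℕ).factorial:ℝ)*((16:ℕ):ℝ)) ≤ 1 * (((16:ℕ):ℝ)+1)/(((16:ℕ).factorial:ℝ)*((16:ℕ):ℝ)) := by gcongr
  have h5 : (1 * (((16:ℕ):ℝ)+1)/(((16:ℕ).factorial:ℝ)*((16:ℕ):ℝ))) * SS ≤ 16 := by
    rw [SS_cast]; norm_num [Nat.factorial]
  have h6 : (eHi Y : ℝ) = eLo Y + 17 := by simp [eHi]
  rw [h6]
  have h7 := mul_le_mul_of_nonneg_right (h1.trans (add_le_add_right h4 _)) hS.le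
  linarith

theorem sqLo_sound (k : ℕ) : ∀ (L : ℕ) (c : ℕ → Bool) (y : ℝ), (L:ℝ)/SS ≤ Real.exp y → sqLo k L c = true →
    ∃ L' : ℕ, (L':ℝ)/SS ≤ Real.exp (2^k*y) ∧ c L' = true := by
  have hS := SS_pos
  induction k with
  | zero => intro L c y h hc; exact ⟨L, by simpa using h, hc⟩
  | succ k ih =>
    intro L c y h hc
    have e : sqLo (k+1) L c = force (L*L/SS) (fun L' => sqLo k L' c) := rfl
    rw [e, force_eq] at hc
    obtain ⟨L', h1, h2⟩ := ih _ c (2*y) (by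
      have h1 : ((L*L/SS : ℕ) : ℝ) ≤ _ := Nat.cast_div_le
      push_cast at h1
      have h3 : (L:ℝ)/SS*((L:ℝ)/SS) ≤ Real.exp y * Real.exp y := by gcongr
      rw [← Real.exp_add] at h3
      rw [show 2*y = y+y by ring]
      refine le_trans ?_ h3
      rw [div_le_iff₀ hS]
      refine h1.trans (le_of_eq ?_)
      field_simp) hc
    refine ⟨L', ?_, h2⟩
    rw [show (2:ℝ)^(k+1)*y = 2^k*(2*y) by ring]
    exact h1

theorem div_lt_cast (a b : ℕ) : (a:ℝ)/b ≤ ((a/b : ℕ):ℝ) + 1 := by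
  have := Nat.lt_floor_add_one ((a:ℝ)/b)
  rw [Nat.floor_div_eq_div] at this
  exact this.le

theorem sqHi_sound (k : ℕ) : ∀ (L : ℕ) (c : ℕ → Bool) (y : ℝ), Real.exp y ≤ (L:ℝ)/SS → sqHi k L c = true →
    ∃ L' : ℕ, Real.exp (2^k*y) ≤ (L':ℝ)/SS ∧ c L' = true := by
  have hS := SS_pos
  induction k with
  | zero => intro L c y h hc; exact ⟨L, by simpa using h, hc⟩
  | succ k ih =>
    intro L c y h hc
    have e : sqHi (k+1) L c = force (L*L/SS+1) (fun L' => sqHi k L' c) := rfl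
    rw [e, force_eq] at hc
    obtain ⟨L', h1, h2⟩ := ih _ c (2*y) (by
      have h1 := div_lt_cast (L*L) SS
      push_cast at h1 ⊢
      have h3 : Real.exp y * Real.exp y ≤ (L:ℝ)/SS*((L:ℝ)/SS) := by gcongr
      rw [← Real.exp_add] at h3
      rw [show 2*y = y+y by ring]
      refine h3.trans ?_
      rw [le_div_iff₀ hS]
      refine le_trans (le_of_eq ?_) h1
      field_simp) hc
    refine ⟨L', ?_, h2⟩
    rw [show (2:ℝ)^(k+1)*y = 2^k*(2*y) by ring]
    exact h1

theorem chk_sound (n B Yl Yh : ℕ) (hn : 1 ≤ n) (h : chk n B Yl Yh = true) :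
    (1 - Real.log n / (5 * (n : ℝ))) * Estar n ≤ (B : ℝ) ∧ (B : ℝ) ≤ Estar n := by
  have hS := SS_pos
  have hn0 : (0:ℝ) < n := by exact_mod_cast hn
  have hn1 : (1:ℝ) ≤ n := by exact_mod_cast hn
  simp only [chk, force_eq, Bool.and_eq_true, Nat.ble_eq] at h
  obtain ⟨h1, h2, hYl1, hYlS, ⟨h3, h4⟩, h5, h6⟩ := h
  have hYl0 : (0:ℝ) < Yl := by exact_mod_cast hYl1
  have hYh0 : (0:ℝ) < Yh := by
    rcases Nat.eq_zero_or_pos Yh with h | h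
    · exfalso
      rw [h] at h2
      have : 0 < n * SS^9 := Nat.mul_pos hn (by norm_num [SS])
      omega
    · exact_mod_cast h
  obtain ⟨hW, hW0⟩ := lambertW_spec n hn0
  have hwl : 8*(Yl:ℝ)/SS ≤ lambertW n := by
    apply lambertW_ge _ _ hn0
    have e : Real.exp (8*(Yl:ℝ)/SS) = (Real.exp (Yl/SS))^8 := by
      rw [← Real.exp_nat_mul]; congr 1; push_cast; ring
    have h1' : 8*(Yl:ℝ)*(eHi Yl:ℝ)^8 ≤ n*(SS:ℝ)^9 := by exact_mod_cast h1
    rw [e]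
    have h7 := le_eHi Yl hYlS
    calc 8*(Yl:ℝ)/SS * (Real.exp (Yl/SS))^8 ≤ 8*(Yl:ℝ)/SS * ((eHi Yl:ℝ)/SS)^8 := by gcongr
      _ = 8*(Yl:ℝ)*(eHi Yl:ℝ)^8 / (SS:ℝ)^9 := by field_simp
      _ ≤ n := by rw [div_le_iff₀ (by positivity)]; exact h1'
  have hwh : lambertW n ≤ 8*(Yh:ℝ)/SS := by
    apply lambertW_le _ _ hn0 (by positivity)
    have e : Real.exp (8*(Yh:ℝ)/SS) = (Real.exp (Yh/SS))^8 := by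
      rw [← Real.exp_nat_mul]; congr 1; push_cast; ring
    have h1' : n*(SS:ℝ)^9 ≤ 8*(Yh:ℝ)*(eLo Yh:ℝ)^8 := by exact_mod_cast h2
    rw [e]
    have h7 := eLo_le Yh
    calc (n:ℝ) ≤ 8*(Yh:ℝ)*(eLo Yh:ℝ)^8 / (SS:ℝ)^9 := by rw [le_div_iff₀ (by positivity)]; exact h1'
      _ = 8*(Yh:ℝ)/SS * ((eLo Yh:ℝ)/SS)^8 := by field_simp
      _ ≤ _ := by gcongr
  rw [Estar]
  set W := lambertW n
  have heW : Real.exp W = n / W := by rw [eq_div_iff hW0.ne', mul_comm]; exact hW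
  obtain ⟨X, hX⟩ : ∃ X, X = Real.exp W + n * W - (n+1) := ⟨_, rfl⟩
  rw [← hX]
  rw [heW] at hX
  have hs0 : 0 < Real.sqrt (1+W) := Real.sqrt_pos.2 (by linarith)
  have hss : Real.sqrt (1+W)^2 = 1+W := Real.sq_sqrt (by linarith)
  have pX := Real.exp_pos X
  constructor
  · obtain ⟨H', hH1, hH2⟩ := sqHi_sound 12 _ _ _ (le_eHi _ h5) h6
    simp only [Nat.ble_eq] at hH2
    set y := (n*SS^2/(8*Yl) + 1 + 8*n*Yh - (n+1)*SS)/4096 + 1 with hy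
    have hyX : X ≤ 2^12*((y:ℝ)/SS) := by
      have a1 := div_lt_cast (n*SS^2/(8*Yl) + 1 + 8*n*Yh - (n+1)*SS) 4096
      have a2 := div_lt_cast (n*SS^2) (8*Yl)
      have a3 : (((n*SS^2/(8*Yl) + 1 + 8*n*Yh : ℕ):ℝ) - (((n+1)*SS : ℕ):ℝ)) ≤ ((n*SS^2/(8*Yl) + 1 + 8*n*Yh - (n+1)*SS : ℕ):ℝ) := by
        rw [sub_le_iff_le_add]
        exact_mod_cast le_tsub_add
      have a4 : (y:ℝ) = (((n*SS^2/(8*Yl) + 1 + 8*n*Yh - (n+1)*SS)/4096 : ℕ):ℝ) + 1 := by rw [hy]; push_cast; rfl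
      rw [← a4] at a1
      have a5 : (n:ℝ)/W ≤ n/(8*(Yl:ℝ)/SS) := by gcongr
      have a6 : n*W ≤ n*(8*(Yh:ℝ)/SS) := by gcongr
      have a7 : X*SS ≤ 4096*y := by
        have b1 : (n:ℝ)/(8*(Yl:ℝ)/SS)*SS = (n*SS^2:ℝ)/(8*Yl) := by field_simp
        have b2 : n*(8*(Yh:ℝ)/SS)*SS = 8*n*Yh := by field_simp
        have b3 := mul_le_mul_of_nonneg_right a5 hS.le
        have b4 := mul_le_mul_of_nonneg_right a6 hS.le
        rw [b1] at b3
        rw [b2] at b4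
        push_cast at a2 a3
        rw [div_le_iff₀ (by norm_num)] at a1
        push_cast at a1
        have : X*SS = n/W*SS + n*W*SS - (n+1)*SS := by rw [hX]; ring
        rw [this]
        linarith
      rw [← mul_div_assoc, le_div_iff₀ hS]
      linarith
    have hXH : Real.exp X ≤ (H':ℝ)/SS := (Real.exp_le_exp.2 hyX).trans hH1
    set v := 8*Yl + SS - (SS^2/(8*Yl) + 1) with hv
    have hvl : (v:ℝ)/SS ≤ Real.log n := by
      rw [div_le_iff₀ hS]
      have hlog : Real.log n = W + Real.log W := by
        rw [← hW, Real.log_mul hW0.ne' (Real.exp_pos W).ne', Real.log_exp]; ring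
      rcases le_total (8*Yl + SS) (SS^2/(8*Yl) + 1) with hh | hh
      · rw [hv, Nat.sub_eq_zero_of_le hh]
        have := Real.log_nonneg hn1
        simp; positivity
      · have a1 : (v:ℝ) = 8*Yl + SS - (((SS^2/(8*Yl) : ℕ):ℝ) + 1) := by
          rw [hv, Nat.cast_sub hh]; push_cast; rfl
        have a2 := div_lt_cast (SS^2) (8*Yl)
        push_cast at a2
        have a3 := Real.one_sub_inv_le_log_of_pos hW0
        have a4 : W⁻¹ ≤ (8*(Yl:ℝ)/SS)⁻¹ := by gcongr
        have a5 : (8*(Yl:ℝ)/SS)⁻¹ * SS = (SS:ℝ)^2/(8*Yl) := by field_simp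
        have a6 : (8*(Yl:ℝ)/SS) * SS = 8*Yl := by field_simp
        rw [hlog, a1]
        have a7 : (8*(Yl:ℝ)/SS) + 1 - (8*(Yl:ℝ)/SS)⁻¹ ≤ W + Real.log W := by linarith
        have a8 := mul_le_mul_of_nonneg_right a7 hS.le
        rw [sub_mul, add_mul, a5, a6] at a8
        linarith
    have hd : 5*n - Real.log n ≤ ((5*n*SS - v : ℕ):ℝ)/SS := by
      rw [le_div_iff₀ hS]
      have : ((5*n*SS : ℕ):ℝ) - v ≤ ((5*n*SS - v : ℕ):ℝ) := by
        rw [sub_le_iff_le_add]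
        exact_mod_cast le_tsub_add
      push_cast at this
      rw [div_le_iff₀ hS] at hvl
      linarith
    set d := 5*n*SS - v
    have hH3 : (d:ℝ)^2*(H':ℝ)^2 ≤ 25*n^2*SS*B^2*(SS+8*Yl)*SS^2 := by exact_mod_cast hH2
    have hd2 : ((d:ℝ)/SS*((H':ℝ)/SS)) ≤ 5*n*B*Real.sqrt (1+W) := by
      apply le_of_sq_le_sq _ (by positivity)
      rw [mul_pow _ (Real.sqrt _), hss]
      calc ((d:ℝ)/SS*((H':ℝ)/SS))^2 = ((d:ℝ)^2*(H':ℝ)^2)/(SS:ℝ)^4 := by field_simp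
        _ ≤ (25*n^2*SS*B^2*(SS+8*Yl)*SS^2)/(SS:ℝ)^4 := by gcongr
        _ = (5*n*B)^2*(1+8*(Yl:ℝ)/SS) := by field_simp; ring
        _ ≤ _ := by gcongr
    have hfin : (5*n - Real.log n) * Real.exp X ≤ 5*n*B*Real.sqrt (1+W) := by
      refine le_trans ?_ hd2
      calc (5*n - Real.log n) * Real.exp X ≤ (d:ℝ)/SS * Real.exp X := by gcongr
        _ ≤ _ := by gcongr
    rw [← mul_div_assoc, div_le_iff₀ hs0]
    have e : 1 - Real.log n/(5*n) = (5*n - Real.log n)/(5*n) := by field_simp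
    rw [e, div_mul_eq_mul_div, div_le_iff₀ (by positivity)]
    linarith
  · obtain ⟨L', hL1, hL2⟩ := sqLo_sound 12 _ _ _ (eLo_le _) h4
    simp only [Nat.ble_eq] at hL2
    set z := (n*SS^2/(8*Yh) + 8*n*Yl - (n+1)*SS)/4096 with hz
    have hzX : 2^12*((z:ℝ)/SS) ≤ X := by
      have a1 : (z:ℝ) ≤ _ := Nat.cast_div_le
      have a2 : ((n*SS^2/(8*Yh) : ℕ):ℝ) ≤ _ := Nat.cast_div_le
      rw [Nat.cast_sub h3] at a1
      have a5 : n/(8*(Yh:ℝ)/SS) ≤ (n:ℝ)/W := by gcongr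
      have a6 : n*(8*(Yl:ℝ)/SS) ≤ n*W := by gcongr
      have b1 : (n:ℝ)/(8*(Yh:ℝ)/SS)*SS = (n*SS^2:ℝ)/(8*Yh) := by field_simp
      have b2 : n*(8*(Yl:ℝ)/SS)*SS = 8*n*Yl := by field_simp
      have b3 := mul_le_mul_of_nonneg_right a5 hS.le
      have b4 := mul_le_mul_of_nonneg_right a6 hS.le
      rw [b1] at b3
      rw [b2] at b4
      push_cast at a1 a2
      rw [le_div_iff₀ (by norm_num)] at a1
      rw [← mul_div_assoc, div_le_iff₀ hS]
      have : X*SS = n/W*SS + n*W*SS - (n+1)*SS := by rw [hX]; ring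
      rw [this]
      linarith
    have hLX : (L':ℝ)/SS ≤ Real.exp X := hL1.trans (Real.exp_le_exp.2 hzX)
    have hL3 : (B:ℝ)^2*(SS+8*Yh)*SS ≤ (L':ℝ)^2 := by exact_mod_cast hL2
    rw [le_div_iff₀ hs0]
    refine le_trans ?_ hLX
    apply le_of_sq_le_sq _ (by positivity)
    rw [mul_pow, hss]
    calc (B:ℝ)^2*(1+W) ≤ (B:ℝ)^2*(1+8*(Yh:ℝ)/SS) := by gcongr
      _ = ((B:ℝ)^2*(SS+8*Yh)*SS)/(SS:ℝ)^2 := by field_simp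
      _ ≤ (L':ℝ)^2/(SS:ℝ)^2 := by gcongr
      _ = _ := by rw [div_pow]

theorem small_check : loop 404 2 [2,3,5] 5 35184372088832 = true := by decide +kernel

theorem small_case (n : ℕ) (hn : 2 ≤ n) (hn2 : n ≤ 405) :
    (1 - Real.log n / (5 * (n : ℝ))) * Estar n ≤ (Bell n : ℝ) ∧ (Bell n : ℝ) ≤ Estar n := by
  have b0 : Bell 0 = 1 := by rw [Bell]
  have b1 : Bell 1 = 1 := by rw [bell_succ]; simp [b0]
  have b2 : Bell 2 = 2 := by rw [bell_succ]; simp [Finset.sum_range_succ, b0, b1]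
  have a2 : aa 0 2 = 5 := by rw [aa]; simp [Finset.sum_range_succ, b0, b1, b2]
  have a1 : aa 1 1 = 3 := by rw [aa]; simp [Finset.sum_range_succ, b0, b1, b2]
  have hsuf : suf 2 0 = [2,3,5] := by simp [suf, a2, a1, aa_zero, b2]
  have h := small_check
  have h2 := loop_sound 404 2 35184372088832 (by rw [hsuf, a2]; exact h) n hn (by omega)
  obtain ⟨Yl, Yh, hc⟩ := h2
  exact chk_sound n _ Yl Yh (by omega) hc

theorem stmt_6 (n : ℕ) (hn : 2 ≤ n) :
    (1 - Real.log n / (5 * (n : ℝ))) * Estar n ≤ (Bell n : ℝ) ∧ (Bell n : ℝ) ≤ Estar n := by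
  rcases le_or_gt n 405 with h | h
  · exact small_case n hn h
  · exact large_case n h
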